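/- arXiv:2208.10579 — 2 statements merged into one kernel-verified Lean document; each statement's English description precedes it below -/
import Mathlib

section
/- (Parametric Transversality Theorem) Let M, N, T be smooth manifolds and S ⊂ N a smooth submanifold. If F : M × T → N is a smooth map transverse to S, then for almost every t ∈ T (all t outside a measure-zero set), the map F_t : M → N, F_t(x) = F(x,t), is transverse to S. -/
/- Framework: embedded submanifolds of Euclidean space (Guillemin–Pollack style),
tangent spaces via velocity vectors of curves, local-straightening charts. -/

noncomputable section
open Set Function
open scoped RealInnerProductSpace

abbrev Euc (n : ℕ) : Type := EuclideanSpace ℝ (Fin n)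

/-- Velocity vectors at `x` of smooth curves through `x` contained in `S`. -/
def tangentSet {E : Type*} [NormedAddCommGroup E] [NormedSpace ℝ E] (S : Set E) (x : E) : Set E :=
  {v | ∃ γ : ℝ → E, (∀ t, γ t ∈ S) ∧ γ 0 = x ∧ HasDerivAt γ v 0}

/-- The tangent space of a subset `S` at `x`, as a linear subspace of the ambient space. -/
def tangentSpaceOf {E : Type*} [NormedAddCommGroup E] [NormedSpace ℝ E] (S : Set E) (x : E) :
    Submodule ℝ E := Submodule.span ℝ (tangentSet S x)

/-- `S` is a smooth embedded `k`-dimensional submanifold (without boundary):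
around every point there is a smooth local straightening diffeomorphism carrying `S`
onto a `k`-dimensional linear subspace. -/
def IsSubmanifoldOfDim {E : Type*} [NormedAddCommGroup E] [NormedSpace ℝ E]
    (k : ℕ) (S : Set E) : Prop :=
  ∀ x ∈ S, ∃ (U V : Set E) (φ ψ : E → E) (K : Submodule ℝ E),
    Module.finrank ℝ K = k ∧ IsOpen U ∧ IsOpen V ∧ x ∈ U ∧
    ContDiffOn ℝ (⊤ : ℕ∞) φ U ∧ ContDiffOn ℝ (⊤ : ℕ∞) ψ V ∧
    MapsTo φ U V ∧ MapsTo ψ V U ∧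
    (∀ y ∈ U, ψ (φ y) = y) ∧ (∀ z ∈ V, φ (ψ z) = z) ∧
    S ∩ U = U ∩ φ ⁻¹' (K : Set E)

/-! In local coordinates `M` is an open subset of a vector space and `S` is the zero set of a map
`g` with `TS = ker dg`, so transversality of `F` and of `F_t` to `S` is a statement about the ranges
of `dG` and `d(G_t)` along `{G = 0}`, where `G = g ∘ F`. Where `dG` is surjective, `{G = 0}` is a
manifold, and at a regular point of its projection to the parameters every parameter direction lifts
to a vector killed by `dG`; hence `d(G_t)` has the same range as `dG`. By Sard's theorem almost
every parameter is a regular value. In general, split the points by the rank of `dG`, and near one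
of them compose `G` with a projection onto the range of `dG` there: the argument then applies at all
nearby points of the same rank.

Sard's theorem goes by induction on the dimension of the domain. At a critical point of `f` either
`df ≠ 0`, and `f` is locally a one-parameter family of maps of one variable less, to which Fubini's
theorem applies; or some higher derivative vanishes but has nonzero differential, which confines the
point to a hypersurface; or `f` is flat to order `dim E`, and the resulting Hölder estimate bounds
the Hausdorff dimension of the image. -/

section
open MeasureTheory Topology Filter
open scoped ContDiff

section LinearAlgebra

variable {E F T : Type*} [NormedAddCommGroup E] [NormedSpace ℝ E] [NormedAddCommGroup F]
  [NormedSpace ℝ F] [NormedAddCommGroup T] [NormedSpace ℝ T]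

lemma exists_continuousLinearMap_ker_eq [FiniteDimensional ℝ E] (K : Submodule ℝ E) :
    ∃ q : E →L[ℝ] E, q.ker = K := by
  obtain ⟨C, hKC⟩ := K.exists_isCompl
  exact ⟨(C.projection K hKC.symm).toContinuousLinearMap, Submodule.ker_projection hKC.symm⟩

lemma exists_continuousLinearEquiv_eq_prod_ker [FiniteDimensional ℝ E] [FiniteDimensional ℝ F]
    {A : E →L[ℝ] F} (hA : Surjective A) :
    ∃ (P : E →L[ℝ] A.ker) (e : E ≃L[ℝ] F × A.ker), ∀ x, e x = (A x, P x) := by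
  obtain ⟨P, hP⟩ := Submodule.ClosedComplemented.of_finiteDimensional A.ker
  have hP_surj : Surjective P := fun k => ⟨k, hP k⟩
  exact ⟨P, A.equivProdOfSurjectiveOfIsCompl P (LinearMap.range_eq_top.2 hA)
    (LinearMap.range_eq_top.2 hP_surj) (LinearMap.isCompl_of_proj hP), fun _ => rfl⟩

lemma isOpen_setOf_surjective [FiniteDimensional ℝ F] :
    IsOpen {A : E →L[ℝ] F | Surjective A} := by
  refine isOpen_iff_mem_nhds.2 fun A hA => ?_
  obtain ⟨B, hAB⟩ := (A : E →ₗ[ℝ] F).exists_rightInverse_of_surjective (LinearMap.range_eq_top.2 hA)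
  let B' : F →L[ℝ] E := B.toContinuousLinearMap
  have hAB' : IsUnit (A.comp B') := by
    convert isUnit_one
    ext y
    exact DFunLike.congr_fun hAB y
  have hcont : Continuous fun A' : E →L[ℝ] F => A'.comp B' := by fun_prop
  filter_upwards [hcont.continuousAt.preimage_mem_nhds (Units.isOpen.mem_nhds hAB')] with A' hA'
  have hsurj : Surjective (A'.comp B') :=
    (ContinuousLinearMap.isUnit_iff_bijective.1 hA').surjective
  exact Surjective.of_comp (f := A') (g := B') hsurj

lemma finrank_ker_lt_of_surjective [FiniteDimensional ℝ E] [Nontrivial F] {A : E →L[ℝ] F}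
    (hA : Surjective A) : Module.finrank ℝ A.ker < Module.finrank ℝ E := by
  refine Submodule.finrank_lt fun hker => ?_
  obtain ⟨y, hy⟩ := exists_ne (0 : F)
  obtain ⟨x, rfl⟩ := hA y
  exact hy (hker.ge (Submodule.mem_top (x := x)))

lemma exists_dual_comp_surjective {A : E →L[ℝ] F} (hA : A ≠ 0) :
    ∃ l : StrongDual ℝ F, Surjective (l.comp A) := by
  obtain ⟨v, hv⟩ := DFunLike.ne_iff.1 hA
  obtain ⟨l, hl⟩ := SeparatingDual.exists_ne_zero (R := ℝ) hv
  exact ⟨l, LinearMap.surjective (f := ((l.comp A : E →L[ℝ] ℝ) : E →ₗ[ℝ] ℝ)) fun h =>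
    hl (DFunLike.congr_fun h v)⟩

lemma surjective_fst_prod_of_surjective_comp_inr {A : T × E →L[ℝ] F}
    (hA : Surjective (A.comp (ContinuousLinearMap.inr ℝ T E))) :
    Surjective ((ContinuousLinearMap.fst ℝ T E).prod A) := by
  rintro ⟨t, y⟩
  obtain ⟨v, hv⟩ := hA (y - A (t, 0))
  refine ⟨(t, v), Prod.ext rfl ?_⟩
  calc A (t, v) = A (t, 0) + A (0, v) := by rw [← map_add, Prod.mk_add_mk, add_zero, zero_add]
    _ = y := by rw [show A (0, v) = y - A (t, 0) from hv, add_sub_cancel]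

lemma surjective_comp_inl_of_comp_eq_zero {K : Type*} [NormedAddCommGroup K] [NormedSpace ℝ K]
    {A : E × T →L[ℝ] F} {B : K →L[ℝ] E × T} (hA : Surjective A) (hAB : A.comp B = 0)
    (hB : Surjective ((ContinuousLinearMap.snd ℝ E T).comp B)) :
    Surjective (A.comp (ContinuousLinearMap.inl ℝ E T)) := by
  intro y
  obtain ⟨⟨x, t⟩, hxt⟩ := hA y
  obtain ⟨k, hk : (B k).2 = t⟩ := hB t
  refine ⟨x - (B k).1, ?_⟩
  calc A (x - (B k).1, 0) = A ((x, t) - B k) := by rw [← hk]; congr 1; simp [Prod.ext_iff]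
    _ = y := by rw [map_sub, hxt, show A (B k) = 0 from DFunLike.congr_fun hAB k, sub_zero]

lemma range_le_range_comp_of_surjective_comp [FiniteDimensional ℝ F] {U Q : Type*}
    [NormedAddCommGroup U] [NormedSpace ℝ U] [NormedAddCommGroup Q] [NormedSpace ℝ Q]
    {A : E →L[ℝ] F} {B : U →L[ℝ] E} {q : F →L[ℝ] Q} (hq : Surjective (q.comp (A.comp B)))
    (hrank : Module.finrank ℝ A.range ≤ Module.finrank ℝ Q) : A.range ≤ (A.comp B).range := by
  have hmap : (A.comp B).range.map (q : F →ₗ[ℝ] Q) = ⊤ := by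
    rw [← LinearMap.range_comp]
    exact LinearMap.range_eq_top.2 hq
  have hle : (A.comp B).range ≤ A.range := LinearMap.range_comp_le_range _ _
  refine (Submodule.eq_of_le_of_finrank_le hle (hrank.trans ?_)).ge
  calc Module.finrank ℝ Q = Module.finrank ℝ ((A.comp B).range.map (q : F →ₗ[ℝ] Q)) := by
        rw [hmap, finrank_top]
    _ ≤ Module.finrank ℝ (A.comp B).range := Submodule.finrank_map_le _ _

end LinearAlgebra

section Calculus

lemma holderOnWith_of_norm_sub_le {X Y : Type*} [SeminormedAddCommGroup X]
    [SeminormedAddCommGroup Y] {f : X → Y} {k : ℕ} {C : NNReal} {s : Set X}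
    (h : ∀ x ∈ s, ∀ y ∈ s, ‖f y - f x‖ ≤ C * ‖y - x‖ ^ k) :
    HolderOnWith C k f s := by
  intro x hx y hy
  rw [edist_nndist, edist_nndist, NNReal.coe_natCast, ENNReal.rpow_natCast]
  norm_cast
  rw [← NNReal.coe_le_coe]
  simpa [dist_eq_norm] using h y hy x hx

variable {E F : Type*} [NormedAddCommGroup E] [NormedSpace ℝ E] [NormedAddCommGroup F]
  [NormedSpace ℝ F]

lemma exists_contDiff_eventuallyEq [FiniteDimensional ℝ E] {n : ℕ∞} {f : E → F} {x : E}
    (hf : ∀ᶠ y in 𝓝 x, ContDiffAt ℝ n f y) : ∃ g : E → F, ContDiff ℝ n g ∧ g =ᶠ[𝓝 x] f := by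
  obtain ⟨r, hr, hball⟩ := Metric.nhds_basis_closedBall.mem_iff.1 hf
  let b : ContDiffBump x := ⟨r / 2, r, by positivity, by linarith⟩
  refine ⟨fun y => b y • f y, contDiff_iff_contDiffAt.2 fun y => ?_, ?_⟩
  · by_cases hy : y ∈ tsupport b
    · exact b.contDiff.contDiffAt.smul (hball (b.tsupport_eq ▸ hy))
    · refine contDiffAt_const (c := 0) |>.congr_of_eventuallyEq ?_
      filter_upwards [notMem_tsupport_iff_eventuallyEq.1 hy] with z hz
      simp [hz]
  · filter_upwards [b.eventuallyEq_one] with z hz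
    simp [hz]

lemma exists_contDiff_localInverse [FiniteDimensional ℝ E] [FiniteDimensional ℝ F] {f : E → F}
    {x₀ : E} (hf : ∀ᶠ x in 𝓝 x₀, ContDiffAt ℝ ∞ f x) {e : E ≃L[ℝ] F}
    (he : HasFDerivAt f (e : E →L[ℝ] F) x₀) :
    ∃ g : F → E, ContDiff ℝ ∞ g ∧ (∀ᶠ x in 𝓝 x₀, g (f x) = x) ∧
      ∀ᶠ y in 𝓝 (f x₀), f (g y) = y := by
  have hf₀ : ContDiffAt ℝ ∞ f x₀ := hf.self_of_nhds
  let H := hf₀.toOpenPartialHomeomorph f he (by simp)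
  have hx₀ : x₀ ∈ H.source := hf₀.mem_toOpenPartialHomeomorph_source he (by simp)
  have hy₀ : f x₀ ∈ H.target := H.map_source hx₀
  have hinv : ∀ᶠ x in 𝓝 x₀, ∃ e' : E ≃L[ℝ] F, (e' : E →L[ℝ] F) = fderiv ℝ f x :=
    (hf₀.fderiv_right (m := 0) (by simp)).continuousAt.preimage_mem_nhds
      (ContinuousLinearEquiv.isOpen.mem_nhds ⟨e, he.fderiv.symm⟩)
  have hsymm : Tendsto H.symm (𝓝 (f x₀)) (𝓝 x₀) := by
    simpa only [ContinuousAt, show H.symm (f x₀) = x₀ from H.left_inv hx₀]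
      using H.symm.continuousAt hy₀
  have hsmooth : ∀ᶠ y in 𝓝 (f x₀), ContDiffAt ℝ ∞ H.symm y := by
    filter_upwards [hsymm.eventually (hinv.and hf), H.open_target.mem_nhds hy₀]
      with y ⟨⟨e', he'⟩, hfy⟩ hy
    refine H.contDiffAt_symm (f₀' := e') hy ?_ hfy
    rw [he']
    exact (hfy.differentiableAt (by simp)).hasFDerivAt
  obtain ⟨g, hg, hgH⟩ := exists_contDiff_eventuallyEq hsmooth
  refine ⟨g, hg, ?_, ?_⟩
  · filter_upwards [hf₀.continuousAt.eventually hgH, H.open_source.mem_nhds hx₀] with x hgx hx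
    exact hgx.trans (H.left_inv hx)
  · filter_upwards [hgH, H.open_target.mem_nhds hy₀] with y hgy hy
    rw [hgy]
    exact H.right_inv hy

lemma exists_contDiff_localInverse_prod_ker [FiniteDimensional ℝ E] [FiniteDimensional ℝ F]
    {g : E → F} {x₀ : E} (hg : ∀ᶠ x in 𝓝 x₀, ContDiffAt ℝ ∞ g x)
    (hsurj : Surjective (fderiv ℝ g x₀)) :
    ∃ (P : E →L[ℝ] (fderiv ℝ g x₀).ker) (Ψ : F × (fderiv ℝ g x₀).ker → E), ContDiff ℝ ∞ Ψ ∧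
      (∀ᶠ x in 𝓝 x₀, Ψ (g x, P x) = x) ∧
      ∀ᶠ z in 𝓝 (g x₀, P x₀), (g (Ψ z), P (Ψ z)) = z := by
  obtain ⟨P, e, he⟩ := exists_continuousLinearEquiv_eq_prod_ker hsurj
  have he' : (e : E →L[ℝ] F × (fderiv ℝ g x₀).ker) = (fderiv ℝ g x₀).prod P :=
    ContinuousLinearMap.ext he
  refine ⟨P, exists_contDiff_localInverse (f := fun x => (g x, P x)) (e := e) ?_ ?_⟩
  · filter_upwards [hg] with x hx
    exact hx.prodMk P.contDiff.contDiffAt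
  · rw [he']
    exact (hg.self_of_nhds.differentiableAt (by simp)).hasFDerivAt.prodMk P.hasFDerivAt

lemma norm_sub_le_mul_pow_succ_of_norm_fderiv_le {f : E → F} (hf : Differentiable ℝ f) {x y : E}
    {C : ℝ} {n : ℕ} (h : ∀ z ∈ segment ℝ x y, ‖fderiv ℝ f z‖ ≤ C * ‖z - x‖ ^ n) (hC : 0 ≤ C) :
    ‖f y - f x‖ ≤ C * ‖y - x‖ ^ (n + 1) := by
  rw [pow_succ, ← mul_assoc]
  refine (convex_segment x y).norm_image_sub_le_of_norm_fderiv_le (𝕜 := ℝ) (fun z _ => hf z)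
    (fun z hz => (h z hz).trans ?_) (left_mem_segment ℝ x y) (right_mem_segment ℝ x y)
  have hzy : ‖z - x‖ ≤ ‖y - x‖ := norm_sub_le_of_mem_segment hz
  gcongr

lemma norm_iteratedFDeriv_sub_le_of_flat {f : E → F} {x : E} {s : Set E} {C : ℝ}
    (hs : Convex ℝ s) (hx : x ∈ s) (hC : 0 ≤ C) {k i n : ℕ} (hk : n + i = k)
    (hf : ContDiff ℝ (k + 1) f) (hbound : ∀ z ∈ s, ‖iteratedFDeriv ℝ (k + 1) f z‖ ≤ C)
    (hflat : ∀ j, n < j → j ≤ k → iteratedFDeriv ℝ j f x = 0) {y : E} (hy : y ∈ s) :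
    ‖iteratedFDeriv ℝ n f y - iteratedFDeriv ℝ n f x‖ ≤ C * ‖y - x‖ ^ (i + 1) := by
  induction i generalizing n y with
  | zero =>
    obtain rfl : n = k := hk
    refine norm_sub_le_mul_pow_succ_of_norm_fderiv_le
      (hf.differentiable_iteratedFDeriv (by norm_cast; omega)) (fun z hz => ?_) hC
    rw [norm_fderiv_iteratedFDeriv, pow_zero, mul_one]
    exact hbound z (hs.segment_subset hx hy hz)
  | succ i ih =>
    refine norm_sub_le_mul_pow_succ_of_norm_fderiv_le
      (hf.differentiable_iteratedFDeriv (by norm_cast; omega)) (fun z hz => ?_) hC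
    have hzero : iteratedFDeriv ℝ (n + 1) f x = 0 := hflat _ (by omega) (by omega)
    have hz' := ih (n := n + 1) (by omega) (fun j hj => hflat j (by omega))
      (hs.segment_subset hx hy hz)
    rwa [hzero, sub_zero, ← norm_fderiv_iteratedFDeriv] at hz'

lemma exists_nhds_norm_sub_le_of_flat {f : E → F} {k : ℕ} (hf : ContDiff ℝ (k + 1) f) (x₀ : E) :
    ∃ O ∈ 𝓝 x₀, ∃ C : NNReal, ∀ x ∈ O, ∀ y ∈ O,
      (∀ j, 0 < j → j ≤ k → iteratedFDeriv ℝ j f x = 0) → ‖f y - f x‖ ≤ C * ‖y - x‖ ^ (k + 1) := by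
  have hcont : Continuous (iteratedFDeriv ℝ (k + 1) f) :=
    hf.continuous_iteratedFDeriv (by norm_cast)
  obtain ⟨r, hr, hball⟩ := Metric.mem_nhds_iff.1
    ((hcont.nnnorm.tendsto x₀).eventually_lt_const (lt_add_one _))
  refine ⟨_, Metric.ball_mem_nhds x₀ hr, ‖iteratedFDeriv ℝ (k + 1) f x₀‖₊ + 1,
    fun x hx y hy hflat => ?_⟩
  have hbound : ∀ z ∈ Metric.ball x₀ r, ‖iteratedFDeriv ℝ (k + 1) f z‖ ≤
      (‖iteratedFDeriv ℝ (k + 1) f x₀‖₊ + 1 : NNReal) := fun z hz => (hball hz).le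
  simpa only [iteratedFDeriv_zero_eq_comp, comp_apply, ← map_sub, LinearIsometryEquiv.norm_map]
    using norm_iteratedFDeriv_sub_le_of_flat (convex_ball x₀ r) hx (NNReal.coe_nonneg _)
      (zero_add k) hf hbound hflat hy

lemma fderiv_ne_zero_or_exists_fderiv_iteratedFDeriv_ne_zero_or_flat (f : E → F) (x : E) :
    fderiv ℝ f x ≠ 0 ∨
      (∃ i, iteratedFDeriv ℝ (i + 1) f x = 0 ∧ fderiv ℝ (iteratedFDeriv ℝ (i + 1) f) x ≠ 0) ∨
      ∀ j, 0 < j → iteratedFDeriv ℝ j f x = 0 := by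
  by_contra! ⟨hf, hstep, j, hj, hne⟩
  refine hne (Nat.le_induction ?_ (fun i hi hzero => ?_) j (Nat.succ_le_of_lt hj))
  · rw [← norm_eq_zero, norm_iteratedFDeriv_one, hf, norm_zero]
  · obtain ⟨i, rfl⟩ := Nat.exists_eq_succ_of_ne_zero (Nat.one_le_iff_ne_zero.1 hi)
    have hnorm : ‖fderiv ℝ (iteratedFDeriv ℝ (i + 1) f) x‖ = 0 := by
      rw [hstep i hzero, ContinuousLinearMap.opNorm_zero]
    rwa [norm_fderiv_iteratedFDeriv, norm_eq_zero] at hnorm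

end Calculus

section Sard

universe u v

lemma measure_image_null_of_locally_null {X Y : Type*} [TopologicalSpace X]
    [SecondCountableTopology X] [MeasurableSpace Y] (μ : Measure Y) {f : X → Y} {s : Set X}
    (h : ∀ x ∈ s, ∃ O ∈ 𝓝 x, μ (f '' (s ∩ O)) = 0) : μ (f '' s) = 0 := by
  simpa only [OuterMeasure.comap_apply, Measure.coe_toOuterMeasure] using
    measure_null_of_locally_null (μ := OuterMeasure.comap f μ.toOuterMeasure) s fun x hx =>
      let ⟨O, hO, hnull⟩ := h x hx
      ⟨s ∩ O, inter_mem_nhdsWithin s hO, (OuterMeasure.comap_apply _ _ _).trans hnull⟩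

variable {E : Type u} {F : Type v} {G : Type*} [NormedAddCommGroup E] [NormedSpace ℝ E]
  [NormedAddCommGroup F] [NormedSpace ℝ F] [NormedAddCommGroup G] [NormedSpace ℝ G]

/-- The critical points of `f`: the points where the Fréchet derivative is not surjective. Since
`fderiv` is zero where `f` is not differentiable, such points are critical unless `F` is trivial. -/
def criticalSet (f : E → F) : Set E := {x | ¬ Surjective (fderiv ℝ f x)}

lemma isClosed_criticalSet [FiniteDimensional ℝ F] {f : E → F} (hf : ContDiff ℝ 1 f) :
    IsClosed (criticalSet f) :=
  (isOpen_setOf_surjective.preimage (hf.continuous_fderiv one_ne_zero)).isClosed_compl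

lemma mem_criticalSet_comp {f : E → F} {g : G → E} {x : G} (hf : DifferentiableAt ℝ f (g x))
    (hg : DifferentiableAt ℝ g x) (hx : g x ∈ criticalSet f) : x ∈ criticalSet (f ∘ g) :=
  fun hsurj => hx <| Surjective.of_comp (g := fderiv ℝ g x) <| by
    rwa [fderiv_comp x hf hg] at hsurj

lemma criticalSet_continuousLinearEquiv_comp (e : F ≃L[ℝ] G) (f : E → F) :
    criticalSet (e ∘ f) = criticalSet f := by
  ext x
  rw [criticalSet, criticalSet, mem_ofPred_eq, mem_ofPred_eq, e.comp_fderiv]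
  exact not_congr (Surjective.of_comp_iff' e.bijective _)

lemma measure_image_criticalSet_fst_prod_eq_zero [FiniteDimensional ℝ E] [FiniteDimensional ℝ F]
    [FiniteDimensional ℝ G] [MeasurableSpace F] [BorelSpace F] [MeasurableSpace G] [BorelSpace G]
    (ν : Measure G) (μ : Measure F) [SFinite μ] {H : G × E → F} (hH : ContDiff ℝ 1 H)
    (hslice : ∀ a, μ ((fun k => H (a, k)) '' criticalSet fun k => H (a, k)) = 0) :
    (ν.prod μ) ((fun z => (z.1, H z)) '' criticalSet fun z => (z.1, H z)) = 0 := by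
  have hq : ContDiff ℝ 1 fun z => (z.1, H z) := contDiff_fst.prodMk hH
  have hmeas : MeasurableSet ((fun z => (z.1, H z)) '' criticalSet fun z => (z.1, H z)) := by
    obtain ⟨K, hK, hKu⟩ := (isSigmaCompact_univ.of_isClosed_subset (isClosed_criticalSet hq)
      (subset_univ _)).image hq.continuous
    exact hKu ▸ MeasurableSet.iUnion fun n => (hK n).measurableSet
  rw [Measure.measure_prod_null hmeas]
  refine Eventually.of_forall fun a => measure_mono_null ?_ (hslice a)
  rintro _ ⟨⟨a', k⟩, hcrit, hz⟩
  obtain ⟨rfl, rfl⟩ : a' = a ∧ H (a', k) = _ := Prod.ext_iff.1 hz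
  have hdH : HasFDerivAt H (fderiv ℝ H (a', k)) (a', k) :=
    (hH.differentiable one_ne_zero _).hasFDerivAt
  refine ⟨k, fun hsurj => hcrit ?_, rfl⟩
  rw [show fderiv ℝ (fun k => H (a', k)) k = _ from
    (hdH.comp k (hasFDerivAt_prodMk_right a' k)).fderiv] at hsurj
  rw [show fderiv ℝ (fun z => (z.1, H z)) (a', k) = _ from (hasFDerivAt_fst.prodMk hdH).fderiv]
  exact surjective_fst_prod_of_surjective_comp_inr hsurj

section Measure

variable [FiniteDimensional ℝ E] [FiniteDimensional ℝ F] [MeasurableSpace F] [BorelSpace F]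
  (μ : Measure F) [μ.IsAddHaarMeasure]

lemma measure_eq_zero_of_dimH_lt_finrank {s : Set F} (hs : dimH s < Module.finrank ℝ F) :
    μ s = 0 := by
  refine measure_zero_of_dimH_lt (d := (Module.finrank ℝ F : NNReal)) ?_ (by simpa using hs)
  simpa using Measure.absolutelyContinuous_isAddHaarMeasure μ
    (Measure.hausdorffMeasure (Module.finrank ℝ F) : Measure F)

lemma measure_preimage_continuousLinearEquiv_null [MeasurableSpace G] [BorelSpace G]
    (e : F ≃L[ℝ] G) (ν : Measure G) [ν.IsAddHaarMeasure] {s : Set G} (hs : ν s = 0) :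
    μ (e ⁻¹' s) = 0 := by
  have : FiniteDimensional ℝ G := e.toLinearEquiv.finiteDimensional
  have := e.isAddHaarMeasure_map μ
  exact Measure.preimage_null_of_map_null e.continuous.aemeasurable
    (Measure.absolutelyContinuous_isAddHaarMeasure (μ.map e) ν hs)

lemma measure_image_flat_eq_zero {f : E → F} {k : ℕ} (hf : ContDiff ℝ (k + 1) f)
    (hk : Module.finrank ℝ E < (k + 1) * Module.finrank ℝ F) :
    μ (f '' {x | ∀ j, 0 < j → j ≤ k → iteratedFDeriv ℝ j f x = 0}) = 0 := by
  refine measure_image_null_of_locally_null μ fun x₀ _ => ?_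
  obtain ⟨O, hO, C, hC⟩ := exists_nhds_norm_sub_le_of_flat hf x₀
  refine ⟨O, hO, measure_eq_zero_of_dimH_lt_finrank μ ?_⟩
  set s := {x | ∀ j, 0 < j → j ≤ k → iteratedFDeriv ℝ j f x = 0} ∩ O
  have hHolder : HolderOnWith C (k + 1 : ℕ) f s :=
    holderOnWith_of_norm_sub_le fun x hx y hy => hC x hx.2 y hy.2 hx.1
  calc dimH (f '' s) ≤ dimH s / ((k + 1 : ℕ) : NNReal) := hHolder.dimH_image_le (by positivity)
    _ ≤ Module.finrank ℝ E / ((k + 1 : ℕ) : NNReal) := by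
      gcongr
      exact (dimH_mono (subset_univ s)).trans (Real.dimH_univ_eq_finrank E).le
    _ < Module.finrank ℝ F := by
      rw [ENNReal.div_lt_iff (by simp) (by simp), mul_comm]
      exact_mod_cast hk

/-- Sard's theorem for maps on spaces of dimension less than `n`; the induction hypothesis in the
proof of Sard's theorem, which passes to hypersurfaces of the domain. -/
def SardBelowDim (n : ℕ) : Prop :=
  ∀ (E : Type u) [NormedAddCommGroup E] [NormedSpace ℝ E] [FiniteDimensional ℝ E]
    (F : Type v) [NormedAddCommGroup F] [NormedSpace ℝ F] [FiniteDimensional ℝ F]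
    [MeasurableSpace F] [BorelSpace F] (μ : Measure F) [μ.IsAddHaarMeasure] (f : E → F),
    Module.finrank ℝ E < n → ContDiff ℝ ∞ f → μ (f '' criticalSet f) = 0

lemma exists_nhds_measure_image_criticalSet_of_fderiv_ne_zero {f : E → F} {x₀ : E}
    (IH : SardBelowDim.{u, v} (Module.finrank ℝ E)) (hf : ContDiff ℝ ∞ f)
    (hx₀ : fderiv ℝ f x₀ ≠ 0) : ∃ O ∈ 𝓝 x₀, μ (f '' (criticalSet f ∩ O)) = 0 := by
  obtain ⟨l, hl⟩ := exists_dual_comp_surjective hx₀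
  obtain ⟨Q, e, he⟩ := exists_continuousLinearEquiv_eq_prod_ker (A := l) (Surjective.of_comp hl)
  let g : E → ℝ := l ∘ f
  have hg : ContDiff ℝ ∞ g := l.contDiff.comp hf
  have hdg : Surjective (fderiv ℝ g x₀) := by
    rwa [(l.hasFDerivAt.comp x₀ (hf.differentiable (by simp) x₀).hasFDerivAt).fderiv]
  obtain ⟨P, Ψ, hΨ, hleft, hright⟩ := exists_contDiff_localInverse_prod_ker
    (Eventually.of_forall fun x => hg.contDiffAt) hdg
  let H : ℝ × (fderiv ℝ g x₀).ker → l.ker := fun z => Q (f (Ψ z))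
  have hH : ContDiff ℝ ∞ H := Q.contDiff.comp (hf.comp hΨ)
  let q : ℝ × (fderiv ℝ g x₀).ker → ℝ × l.ker := fun z => (z.1, H z)
  have hq_null : (volume.prod Measure.addHaar) (q '' criticalSet q) = 0 :=
    measure_image_criticalSet_fst_prod_eq_zero volume _ (hH.of_le (by simp)) fun a =>
      IH _ _ _ _ (finrank_ker_lt_of_surjective hdg) (hH.comp (contDiff_prodMk_right a))
  have hq_eq : q =ᶠ[𝓝 (g x₀, P x₀)] e ∘ f ∘ Ψ := by
    filter_upwards [hright] with z hz
    rw [comp_apply, comp_apply, he]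
    exact Prod.ext (congrArg Prod.fst hz).symm rfl
  have hcont : ContinuousAt (fun x => (g x, P x)) x₀ := by
    exact (hg.continuous.prodMk P.continuous).continuousAt
  refine ⟨_, hleft.and (hcont.eventually hq_eq.eventuallyEq_nhds),
    measure_mono_null ?_ (measure_preimage_continuousLinearEquiv_null μ e _ hq_null)⟩
  rintro _ ⟨x, ⟨hx, hΨx, hqx⟩, rfl⟩
  refine ⟨(g x, P x), ?_, ?_⟩
  · rw [criticalSet, mem_ofPred_eq, hqx.fderiv_eq]
    refine mem_criticalSet_comp (f := e ∘ f) ?_ (hΨ.differentiable (by simp) _) ?_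
    · exact (e.differentiable.comp (hf.differentiable (by simp))) _
    · rwa [criticalSet_continuousLinearEquiv_comp, hΨx]
  · rw [hqx.self_of_nhds, comp_apply, comp_apply, hΨx]

lemma exists_nhds_measure_image_criticalSet_inter_zeros {f : E → F} {h : E → G} {x₀ : E}
    (IH : SardBelowDim.{u, v} (Module.finrank ℝ E)) (hf : ContDiff ℝ ∞ f) (hh : ContDiff ℝ ∞ h)
    (hx₀ : fderiv ℝ h x₀ ≠ 0) :
    ∃ O ∈ 𝓝 x₀, μ (f '' ((criticalSet f ∩ h ⁻¹' {0}) ∩ O)) = 0 := by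
  obtain ⟨l, hl⟩ := exists_dual_comp_surjective hx₀
  let g : E → ℝ := l ∘ h
  have hg : ContDiff ℝ ∞ g := l.contDiff.comp hh
  have hdg : Surjective (fderiv ℝ g x₀) := by
    rwa [(l.hasFDerivAt.comp x₀ (hh.differentiable (by simp) x₀).hasFDerivAt).fderiv]
  obtain ⟨P, Ψ, hΨ, hleft, -⟩ := exists_contDiff_localInverse_prod_ker
    (Eventually.of_forall fun x => hg.contDiffAt) hdg
  have hΨ₀ : ContDiff ℝ ∞ fun k => Ψ (0, k) := hΨ.comp (contDiff_prodMk_right 0)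
  refine ⟨_, hleft, measure_mono_null ?_
    (IH _ _ μ (fun k => f (Ψ (0, k))) (finrank_ker_lt_of_surjective hdg) (hf.comp hΨ₀))⟩
  rintro _ ⟨x, ⟨⟨hx, hhx : h x = 0⟩, hΨx : Ψ (l (h x), P x) = x⟩, rfl⟩
  rw [hhx, map_zero] at hΨx
  refine ⟨P x, ?_, congrArg f hΨx⟩
  refine mem_criticalSet_comp (hf.differentiable (by simp) _) (hΨ₀.differentiable (by simp) _) ?_
  rwa [hΨx]

lemma measure_image_criticalSet_eq_zero_of_sardBelowDim {f : E → F}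
    (IH : SardBelowDim.{u, v} (Module.finrank ℝ E)) (hf : ContDiff ℝ ∞ f) :
    μ (f '' criticalSet f) = 0 := by
  rcases subsingleton_or_nontrivial F with hF | hF
  · have hempty : criticalSet f = ∅ :=
      eq_empty_of_forall_notMem fun x hx => hx fun y => ⟨0, Subsingleton.elim _ _⟩
    rw [hempty, image_empty, measure_empty]
  let D (i : ℕ) := iteratedFDeriv ℝ (i + 1) f
  have hD (i : ℕ) : ContDiff ℝ ∞ (D i) := hf.iteratedFDeriv_right (mod_cast le_top)
  let A : Set E := {x ∈ criticalSet f | fderiv ℝ f x ≠ 0}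
  let B (i : ℕ) : Set E := {x ∈ criticalSet f | D i x = 0 ∧ fderiv ℝ (D i) x ≠ 0}
  let C : Set E := {x | ∀ j, 0 < j → j ≤ Module.finrank ℝ E → iteratedFDeriv ℝ j f x = 0}
  have hcover : criticalSet f ⊆ A ∪ (⋃ i, B i) ∪ C := by
    intro x hx
    rcases fderiv_ne_zero_or_exists_fderiv_iteratedFDeriv_ne_zero_or_flat f x
      with hne | ⟨i, hi⟩ | hflat
    · exact Or.inl (Or.inl ⟨hx, hne⟩)
    · exact Or.inl (Or.inr (mem_iUnion.2 ⟨i, hx, hi⟩))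
    · exact Or.inr fun j hj _ => hflat j hj
  have hA : μ (f '' A) = 0 := measure_image_null_of_locally_null μ fun x₀ hx₀ => by
    obtain ⟨O, hO, hnull⟩ := exists_nhds_measure_image_criticalSet_of_fderiv_ne_zero μ IH hf hx₀.2
    exact ⟨O, hO, measure_mono_null (image_mono (inter_subset_inter_left O fun x hx => hx.1)) hnull⟩
  have hB (i : ℕ) : μ (f '' B i) = 0 := measure_image_null_of_locally_null μ fun x₀ hx₀ => by
    obtain ⟨O, hO, hnull⟩ :=
      exists_nhds_measure_image_criticalSet_inter_zeros μ IH hf (hD i) hx₀.2.2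
    have hBi : B i ⊆ criticalSet f ∩ D i ⁻¹' {0} := fun x hx => ⟨hx.1, hx.2.1⟩
    exact ⟨O, hO, measure_mono_null (image_mono (inter_subset_inter_left O hBi)) hnull⟩
  have hC : μ (f '' C) = 0 := measure_image_flat_eq_zero μ (hf.of_le (mod_cast le_top)) <|
    (Nat.lt_succ_self _).trans_le (Nat.le_mul_of_pos_right _ Module.finrank_pos)
  refine measure_mono_null (image_mono hcover) ?_
  rw [image_union, image_union, image_iUnion]
  exact measure_union_null (measure_union_null hA (measure_iUnion_null hB)) hC

lemma sardBelowDim (n : ℕ) : SardBelowDim.{u, v} n := by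
  induction n with
  | zero => exact fun _ _ _ _ _ _ _ _ _ _ _ _ _ hn => absurd hn (Nat.not_lt_zero _)
  | succ n ih =>
    intro E _ _ _ F _ _ _ _ _ μ _ f hn hf
    refine measure_image_criticalSet_eq_zero_of_sardBelowDim μ ?_ hf
    exact fun E' _ _ _ F' _ _ _ _ _ μ' _ f' hE' =>
      ih E' F' μ' f' (hE'.trans_le (Nat.lt_succ_iff.1 hn))

theorem measure_image_criticalSet_eq_zero {f : E → F} (hf : ContDiff ℝ ∞ f) :
    μ (f '' criticalSet f) = 0 :=
  sardBelowDim _ E F μ f (Nat.lt_succ_self _) hf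

end Measure

end Sard

section ParametricRank

variable {E T F : Type*} [NormedAddCommGroup E] [NormedSpace ℝ E] [FiniteDimensional ℝ E]
  [NormedAddCommGroup T] [NormedSpace ℝ T] [FiniteDimensional ℝ T] [NormedAddCommGroup F]
  [NormedSpace ℝ F] [FiniteDimensional ℝ F] [MeasurableSpace T] [BorelSpace T]
  (μ : Measure T) [μ.IsAddHaarMeasure]

lemma exists_null_eventually_surjective_fderiv_comp_inl {G : E × T → F} {p₀ : E × T}
    (hG : ∀ᶠ p in 𝓝 p₀, ContDiffAt ℝ ∞ G p) (hsurj : Surjective (fderiv ℝ G p₀)) :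
    ∃ Z : Set T, μ Z = 0 ∧ ∀ᶠ p in 𝓝 p₀, p.2 ∉ Z → G p = 0 →
      Surjective ((fderiv ℝ G p).comp (ContinuousLinearMap.inl ℝ E T)) := by
  obtain ⟨P, Ψ, hΨ, hleft, hright⟩ := exists_contDiff_localInverse_prod_ker hG hsurj
  let R : (fderiv ℝ G p₀).ker → E × T := fun k => Ψ (0, k)
  have hR : ContDiff ℝ ∞ R := hΨ.comp (contDiff_prodMk_right 0)
  have hG₀ : ContDiffAt ℝ ∞ G p₀ := hG.self_of_nhds
  have hsurj_near : ∀ᶠ p in 𝓝 p₀, Surjective (fderiv ℝ G p) :=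
    (hG₀.fderiv_right (m := 0) (by simp)).continuousAt.preimage_mem_nhds
      (isOpen_setOf_surjective.mem_nhds hsurj)
  have hcont : ContinuousAt (fun p => (G p, P p)) p₀ :=
    hG₀.continuousAt.prodMk P.continuous.continuousAt
  refine ⟨_, measure_image_criticalSet_eq_zero μ (contDiff_snd.comp hR), ?_⟩
  filter_upwards [hleft, hcont.eventually hright.eventually_nhds, hsurj_near, hG]
    with p hΨp hright_p hsurj_p hGp hpZ hGp₀
  have hRp : R (P p) = p := by rwa [hGp₀] at hΨp
  have hdR : HasFDerivAt R (fderiv ℝ R (P p)) (P p) := (hR.differentiable (by simp) _).hasFDerivAt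
  refine surjective_comp_inl_of_comp_eq_zero (B := fderiv ℝ R (P p)) hsurj_p ?_ ?_
  · have hGR : G ∘ R =ᶠ[𝓝 (P p)] fun _ => 0 := by
      rw [hGp₀] at hright_p
      filter_upwards [(Continuous.prodMk_right (0 : F)).continuousAt.eventually hright_p] with k hk
      exact congrArg Prod.fst hk
    have hdG : HasFDerivAt G (fderiv ℝ G p) (R (P p)) := by
      rw [hRp]
      exact (hGp.differentiableAt (by simp)).hasFDerivAt
    exact (hdG.comp (P p) hdR).unique ((hasFDerivAt_const 0 (P p)).congr_of_eventuallyEq hGR)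
  · rw [← (hasFDerivAt_snd.comp (P p) hdR).fderiv]
    by_contra hcrit
    exact hpZ ⟨P p, hcrit, congrArg Prod.snd hRp⟩

lemma exists_null_eventually_range_fderiv_le {G : E × T → F} {p₀ : E × T}
    (hG : ∀ᶠ p in 𝓝 p₀, ContDiffAt ℝ ∞ G p) :
    ∃ Z : Set T, μ Z = 0 ∧ ∀ᶠ p in 𝓝 p₀, p.2 ∉ Z → G p = 0 →
      Module.finrank ℝ (fderiv ℝ G p).range ≤ Module.finrank ℝ (fderiv ℝ G p₀).range →
      (fderiv ℝ G p).range ≤ ((fderiv ℝ G p).comp (ContinuousLinearMap.inl ℝ E T)).range := by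
  obtain ⟨q, hq⟩ := Submodule.ClosedComplemented.of_finiteDimensional (fderiv ℝ G p₀).range
  have hqG : ∀ᶠ p in 𝓝 p₀, ContDiffAt ℝ ∞ (q ∘ G) p ∧
      fderiv ℝ (q ∘ G) p = q.comp (fderiv ℝ G p) := by
    filter_upwards [hG] with p hp
    exact ⟨q.contDiff.contDiffAt.comp p hp,
      (q.hasFDerivAt.comp p (hp.differentiableAt (by simp)).hasFDerivAt).fderiv⟩
  have hsurj : Surjective (fderiv ℝ (q ∘ G) p₀) := by
    rw [hqG.self_of_nhds.2]
    rintro ⟨_, v, rfl⟩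
    exact ⟨v, hq ⟨_, v, rfl⟩⟩
  obtain ⟨Z, hZ, hregular⟩ :=
    exists_null_eventually_surjective_fderiv_comp_inl μ (hqG.mono fun _ hp => hp.1) hsurj
  refine ⟨Z, hZ, ?_⟩
  filter_upwards [hregular, hqG] with p hp hdp hpZ hGp hrank
  have hqp := hp hpZ (by rw [comp_apply, hGp, map_zero])
  rw [hdp.2] at hqp
  exact range_le_range_comp_of_surjective_comp hqp hrank

theorem ae_range_fderiv_le_range_fderiv_comp_inl {G : E × T → F} {W : Set (E × T)}
    (hW : IsOpen W) (hG : ContDiffOn ℝ ∞ G W) :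
    ∀ᵐ t ∂μ, ∀ x, (x, t) ∈ W → G (x, t) = 0 → (fderiv ℝ G (x, t)).range ≤
      ((fderiv ℝ G (x, t)).comp (ContinuousLinearMap.inl ℝ E T)).range := by
  let bad (r : ℕ) : Set (E × T) := {p ∈ W | G p = 0 ∧ Module.finrank ℝ (fderiv ℝ G p).range = r ∧
    ¬ (fderiv ℝ G p).range ≤ ((fderiv ℝ G p).comp (ContinuousLinearMap.inl ℝ E T)).range}
  have hbad (r : ℕ) : μ (Prod.snd '' bad r) = 0 := by
    refine measure_image_null_of_locally_null μ fun p₀ ⟨hp₀, _, hr, _⟩ => ?_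
    have hG₀ : ∀ᶠ p in 𝓝 p₀, ContDiffAt ℝ ∞ G p := by
      filter_upwards [hW.mem_nhds hp₀] with p hp
      exact hG.contDiffAt (hW.mem_nhds hp)
    obtain ⟨Z, hZ, hnear⟩ := exists_null_eventually_range_fderiv_le μ hG₀
    refine ⟨_, hnear, measure_mono_null ?_ hZ⟩
    rintro _ ⟨p, ⟨⟨_, hGp, hrp, hp⟩, hpZ⟩, rfl⟩
    by_contra hpZ'
    exact hp (hpZ hpZ' hGp (hrp.trans hr.symm).le)
  refine measure_mono_null (fun t ht => ?_) (measure_iUnion_null hbad)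
  simp only [mem_compl_iff, mem_ofPred_eq, not_forall] at ht
  obtain ⟨x, hW', hGx, hx⟩ := ht
  exact mem_iUnion.2 ⟨_, (x, t), ⟨hW', hGx, rfl, hx⟩, rfl⟩

end ParametricRank

section TangentSpace

variable {E F : Type*} [NormedAddCommGroup E] [NormedSpace ℝ E] [NormedAddCommGroup F]
  [NormedSpace ℝ F]

lemma mem_tangentSet_of_eventually {M : Set E} {v : E} {γ : ℝ → E}
    (hM : ∀ᶠ t in 𝓝 0, γ t ∈ M) (hγ : HasDerivAt γ v 0) : v ∈ tangentSet M (γ 0) := by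
  classical
  have h₀ : γ 0 ∈ M := hM.self_of_nhds
  refine ⟨fun t => if γ t ∈ M then γ t else γ 0, fun t => ?_, if_pos h₀, ?_⟩
  · dsimp only
    split_ifs with ht
    exacts [ht, h₀]
  · exact hγ.congr_of_eventuallyEq (hM.mono fun t ht => if_pos ht)

lemma range_fderiv_le_tangentSpaceOf {M : Set F} {ρ : E → F} {k : E}
    (hρ : DifferentiableAt ℝ ρ k) (hM : ∀ᶠ k' in 𝓝 k, ρ k' ∈ M) :
    (fderiv ℝ ρ k).range ≤ tangentSpaceOf M (ρ k) := by
  rintro _ ⟨v, rfl⟩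
  have hline : HasDerivAt (fun t : ℝ => k + t • v) v 0 := by
    simpa using ((hasDerivAt_id (0 : ℝ)).smul_const v).const_add k
  have hk : k + (0 : ℝ) • v = k := by simp
  have hcurve : HasDerivAt (fun t : ℝ => ρ (k + t • v)) (fderiv ℝ ρ k v) 0 :=
    HasFDerivAt.comp_hasDerivAt (0 : ℝ) (hk.symm ▸ hρ.hasFDerivAt) hline
  have hmem : ∀ᶠ t : ℝ in 𝓝 0, ρ (k + t • v) ∈ M :=
    hline.continuousAt.eventually (p := fun k' => ρ k' ∈ M) (by simpa only [hk] using hM)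
  have hv : fderiv ℝ ρ k v ∈ tangentSet M (ρ k) := by
    simpa only [hk] using mem_tangentSet_of_eventually hmem hcurve
  exact Submodule.subset_span hv

lemma tangentSpaceOf_le_ker_fderiv {M : Set E} {g : E → F} {x : E} (hg : DifferentiableAt ℝ g x)
    (hM : ∀ᶠ y in 𝓝 x, y ∈ M → g y = 0) : tangentSpaceOf M x ≤ (fderiv ℝ g x).ker := by
  refine Submodule.span_le.2 ?_
  rintro v ⟨γ, hγM, rfl, hγ⟩
  have hgγ : g ∘ γ =ᶠ[𝓝 0] fun _ => 0 :=
    (hγ.continuousAt.eventually hM).mono fun t ht => ht (hγM t)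
  exact (hg.hasFDerivAt.comp_hasDerivAt (0 : ℝ) hγ).unique
    ((hasDerivAt_const (0 : ℝ) (0 : F)).congr_of_eventuallyEq hgγ)

lemma tangentSpaceOf_eq_ker_and_eq_range {G : Type*} [NormedAddCommGroup G] [NormedSpace ℝ G]
    {M : Set E} {ρ : G → E} {k : G} {g : E → F} (hρ : DifferentiableAt ℝ ρ k)
    (hρM : ∀ᶠ k' in 𝓝 k, ρ k' ∈ M) (hg : DifferentiableAt ℝ g (ρ k))
    (hgM : ∀ᶠ y in 𝓝 (ρ k), y ∈ M → g y = 0)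
    (hker : (fderiv ℝ g (ρ k)).ker ≤ (fderiv ℝ ρ k).range) :
    tangentSpaceOf M (ρ k) = (fderiv ℝ g (ρ k)).ker ∧
      tangentSpaceOf M (ρ k) = (fderiv ℝ ρ k).range := by
  have hrange_le := range_fderiv_le_tangentSpaceOf hρ hρM
  have hle_ker := tangentSpaceOf_le_ker_fderiv hg hgM
  exact ⟨hle_ker.antisymm (hker.trans hrange_le), (hle_ker.trans hker).antisymm hrange_le⟩

lemma map_fst_tangentSpaceOf_prod_le (M : Set E) (N : Set F) (p : E × F) :
    (tangentSpaceOf (M ×ˢ N) p).map (LinearMap.fst ℝ E F) ≤ tangentSpaceOf M p.1 := by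
  refine Submodule.map_le_iff_le_comap.2 (Submodule.span_le.2 ?_)
  rintro _ ⟨γ, hγM, rfl, hγ⟩
  exact Submodule.subset_span ⟨fun t => (γ t).1, fun t => (hγM t).1, rfl,
    (ContinuousLinearMap.fst ℝ E F).hasFDerivAt.comp_hasDerivAt (0 : ℝ) hγ⟩

lemma ker_comp_le_range_comp_subtypeL {A B : E →L[ℝ] E} {q : E →L[ℝ] F} {K : Submodule ℝ E}
    (hBA : B.comp A = ContinuousLinearMap.id ℝ E) (hq : q.ker ≤ K) :
    (q.comp A).ker ≤ (B.comp K.subtypeL).range := fun v hv =>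
  ⟨⟨A v, hq hv⟩, DFunLike.congr_fun hBA v⟩

lemma IsSubmanifoldOfDim.exists_parametrization_and_equation [FiniteDimensional ℝ E] {k : ℕ}
    {M : Set E} (hM : IsSubmanifoldOfDim k M) {x₀ : E} (hx₀ : x₀ ∈ M) :
    ∃ (K : Submodule ℝ E) (V : Set K) (ρ : K → E) (U : Set E) (g : E → E),
      IsOpen V ∧ ContDiffOn ℝ ∞ ρ V ∧ IsOpen U ∧ x₀ ∈ U ∧ ContDiffOn ℝ ∞ g U ∧
      ∀ x ∈ M ∩ U, g x = 0 ∧ tangentSpaceOf M x = (fderiv ℝ g x).ker ∧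
        ∃ κ ∈ V, ρ κ = x ∧ tangentSpaceOf M x = (fderiv ℝ ρ κ).range := by
  obtain ⟨U, V, φ, ψ, K, -, hU, hV, hx₀U, hφ, hψ, hφUV, hψVU, hψφ, hφψ, hMU⟩ := hM x₀ hx₀
  obtain ⟨q, hq⟩ := exists_continuousLinearMap_ker_eq K
  have hmem (x : E) (hxU : x ∈ U) : x ∈ M ↔ φ x ∈ K := by
    simpa [hxU] using Set.ext_iff.1 hMU x
  refine ⟨K, (↑) ⁻¹' V, ψ ∘ (↑), U, q ∘ φ, hV.preimage continuous_subtype_val,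
    hψ.comp K.subtypeL.contDiff.contDiffOn (mapsTo_preimage _ _), hU, hx₀U,
    q.contDiff.comp_contDiffOn hφ, fun x ⟨hxM, hxU⟩ => ?_⟩
  let κ : K := ⟨φ x, (hmem x hxU).1 hxM⟩
  have hdφ : HasFDerivAt φ (fderiv ℝ φ x) x :=
    ((hφ.contDiffAt (hU.mem_nhds hxU)).differentiableAt (by simp)).hasFDerivAt
  have hdψ : HasFDerivAt ψ (fderiv ℝ ψ (φ x)) (φ x) :=
    ((hψ.contDiffAt (hV.mem_nhds (hφUV hxU))).differentiableAt (by simp)).hasFDerivAt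
  have hdρ : HasFDerivAt (ψ ∘ ((↑) : K → E)) ((fderiv ℝ ψ (φ x)).comp K.subtypeL) κ :=
    HasFDerivAt.comp κ hdψ K.subtypeL.hasFDerivAt
  have hdg : HasFDerivAt (q ∘ φ) (q.comp (fderiv ℝ φ x)) x := q.hasFDerivAt.comp x hdφ
  have hdψφ : (fderiv ℝ ψ (φ x)).comp (fderiv ℝ φ x) = ContinuousLinearMap.id ℝ E :=
    (hdψ.comp x hdφ).unique <| (hasFDerivAt_id x).congr_of_eventuallyEq <| by
      filter_upwards [hU.mem_nhds hxU] with y hy using hψφ y hy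
  have hg (y : E) (hyU : y ∈ U) (hyM : y ∈ M) : q (φ y) = 0 := hq.ge ((hmem y hyU).1 hyM)
  have hρM : ∀ᶠ κ' : K in 𝓝 κ, ψ κ' ∈ M := by
    filter_upwards [(hV.preimage continuous_subtype_val).mem_nhds (hφUV hxU)] with κ' hκ'
    rw [hmem _ (hψVU hκ'), hφψ _ hκ']
    exact κ'.2
  have hgM : ∀ᶠ y in 𝓝 x, y ∈ M → (q ∘ φ) y = 0 := by
    filter_upwards [hU.mem_nhds hxU] with y hy using hg y hy
  have hker : (fderiv ℝ (q ∘ φ) x).ker ≤ (fderiv ℝ (ψ ∘ (↑)) κ).range := by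
    rw [hdg.fderiv, hdρ.fderiv]
    exact ker_comp_le_range_comp_subtypeL hdψφ hq.le
  have hκ : (ψ ∘ (↑)) κ = x := hψφ x hxU
  obtain ⟨hT_ker, hT_range⟩ := tangentSpaceOf_eq_ker_and_eq_range (M := M) (g := q ∘ φ)
    hdρ.differentiableAt hρM (by rw [hκ]; exact hdg.differentiableAt) (by rwa [hκ]) (by rwa [hκ])
  rw [hκ] at hT_ker hT_range
  exact ⟨hg x hxU hxM, hT_ker, κ, hφUV hxU, hκ, hT_range⟩

end TangentSpace

section Transversality

variable {E T F : Type*} [NormedAddCommGroup E] [NormedSpace ℝ E] [NormedAddCommGroup T]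
  [NormedSpace ℝ T] [NormedAddCommGroup F] [NormedSpace ℝ F]

lemma map_le_ker_sup_map_range {K Q : Type*} [NormedAddCommGroup K] [NormedSpace ℝ K]
    [NormedAddCommGroup Q] [NormedSpace ℝ Q] {A : E × T →L[ℝ] F} {B : K →L[ℝ] E} {C : F →L[ℝ] Q}
    {J : K × T →L[ℝ] Q} (hJ : J = C.comp (A.comp (B.prodMap (ContinuousLinearMap.id ℝ T))))
    (hrange : J.range ≤ (J.comp (ContinuousLinearMap.inl ℝ K T)).range) {D : Submodule ℝ (E × T)}
    (hD : D.map (LinearMap.fst ℝ E T) ≤ B.range) :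
    D.map (A : E × T →ₗ[ℝ] F) ≤
      C.ker ⊔ B.range.map (A.comp (ContinuousLinearMap.inl ℝ E T) : E →ₗ[ℝ] F) := by
  subst hJ
  rintro _ ⟨⟨x, t⟩, hv, rfl⟩
  obtain ⟨κ, rfl⟩ := hD ⟨_, hv, rfl⟩
  obtain ⟨κ', hκ' : C (A (B κ', 0)) = C (A (B κ, t))⟩ := hrange ⟨(κ, t), rfl⟩
  refine Submodule.mem_sup.2 ⟨A (B κ, t) - A (B κ', 0), ?_, _, ⟨B κ', ⟨κ', rfl⟩, rfl⟩,
    sub_add_cancel _ _⟩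
  change C (A (B κ, t) - A (B κ', 0)) = 0
  rw [map_sub, hκ', sub_self]

variable [FiniteDimensional ℝ E] [FiniteDimensional ℝ T] [FiniteDimensional ℝ F]
  [MeasurableSpace T] [BorelSpace T] (μ : Measure T) [μ.IsAddHaarMeasure]
  {k l : ℕ} {M : Set E} {S : Set F}

lemma exists_nhds_ae_map_tangentSpaceOf_prod_le (hM : IsSubmanifoldOfDim k M)
    (hS : IsSubmanifoldOfDim l S) {f : E × T → F} (hf : ContDiff ℝ ∞ f) {p₀ : E × T}
    (hp₀M : p₀.1 ∈ M) (hp₀S : f p₀ ∈ S) :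
    ∃ O ∈ 𝓝 p₀, ∀ᵐ t ∂μ, ∀ x ∈ M, (x, t) ∈ O → f (x, t) ∈ S →
      (tangentSpaceOf (M ×ˢ univ) (x, t)).map (fderiv ℝ f (x, t) : E × T →ₗ[ℝ] F) ≤
        tangentSpaceOf S (f (x, t)) ⊔
          (tangentSpaceOf M x).map (fderiv ℝ (fun x' => f (x', t)) x : E →ₗ[ℝ] F) := by
  obtain ⟨K, V, ρ, U, _, hV, hρ, hU, hp₀U, -, hMU⟩ := hM.exists_parametrization_and_equation hp₀M
  obtain ⟨_, _, _, Y, g, -, -, hY, hp₀Y, hg, hSY⟩ := hS.exists_parametrization_and_equation hp₀S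
  let Φ : K × T → E × T := Prod.map ρ id
  have hΦ : ContDiffOn ℝ ∞ Φ (V ×ˢ univ) := hρ.prodMap contDiffOn_id
  let W : Set (K × T) := (V ×ˢ univ) ∩ (f ∘ Φ) ⁻¹' Y
  have hW : IsOpen W :=
    (hf.comp_contDiffOn hΦ).continuousOn.isOpen_inter_preimage (hV.prod isOpen_univ) hY
  have hG : ContDiffOn ℝ ∞ (g ∘ f ∘ Φ) W :=
    hg.comp ((hf.comp_contDiffOn hΦ).mono inter_subset_left) inter_subset_right
  refine ⟨(U ×ˢ univ) ∩ f ⁻¹' Y, ((hU.prod isOpen_univ).inter (hY.preimage hf.continuous)).mem_nhds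
    ⟨⟨hp₀U, mem_univ _⟩, hp₀Y⟩, ?_⟩
  filter_upwards [ae_range_fderiv_le_range_fderiv_comp_inl μ hW hG]
    with t hrank x hxM ⟨⟨hxU, _⟩, hxY⟩ hxS
  obtain ⟨hg_zero, hTS, -⟩ := hSY _ ⟨hxS, hxY⟩
  obtain ⟨-, -, κ, hκV, rfl, hTM⟩ := hMU _ ⟨hxM, hxU⟩
  have hdf : HasFDerivAt f (fderiv ℝ f (ρ κ, t)) (ρ κ, t) :=
    (hf.differentiable (by simp) _).hasFDerivAt
  have hdρ : HasFDerivAt ρ (fderiv ℝ ρ κ) κ :=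
    ((hρ.contDiffAt (hV.mem_nhds hκV)).differentiableAt (by simp)).hasFDerivAt
  have hdg : HasFDerivAt g (fderiv ℝ g (f (ρ κ, t))) (f (ρ κ, t)) :=
    ((hg.contDiffAt (hY.mem_nhds hxY)).differentiableAt (by simp)).hasFDerivAt
  have hdG : HasFDerivAt (g ∘ f ∘ Φ) _ (κ, t) :=
    hdg.comp (κ, t) (hdf.comp (κ, t) (hdρ.prodMap (κ, t) (hasFDerivAt_id t)))
  have hdft : HasFDerivAt (fun x' => f (x', t)) _ (ρ κ) :=
    hdf.comp (ρ κ) (hasFDerivAt_prodMk_left (ρ κ) t)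
  rw [hTS, hTM, hdft.fderiv]
  refine map_le_ker_sup_map_range hdG.fderiv (hrank κ ⟨⟨hκV, mem_univ t⟩, hxY⟩ hg_zero) ?_
  exact (map_fst_tangentSpaceOf_prod_le M univ (ρ κ, t)).trans hTM.le

theorem parametric_transversality_general (hM : IsSubmanifoldOfDim k M)
    (hS : IsSubmanifoldOfDim l S) {f : E × T → F} (hf : ContDiff ℝ ∞ f) :
    ∀ᵐ t ∂μ, ∀ x ∈ M, f (x, t) ∈ S →
      (tangentSpaceOf (M ×ˢ univ) (x, t)).map (fderiv ℝ f (x, t) : E × T →ₗ[ℝ] F) ≤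
        tangentSpaceOf S (f (x, t)) ⊔
          (tangentSpaceOf M x).map (fderiv ℝ (fun x' => f (x', t)) x : E →ₗ[ℝ] F) := by
  let bad : Set (E × T) := {p | p.1 ∈ M ∧ f p ∈ S ∧
    ¬ (tangentSpaceOf (M ×ˢ univ) p).map (fderiv ℝ f p : E × T →ₗ[ℝ] F) ≤
      tangentSpaceOf S (f p) ⊔
        (tangentSpaceOf M p.1).map (fderiv ℝ (fun x' => f (x', p.2)) p.1 : E →ₗ[ℝ] F)}
  have hbad : μ (Prod.snd '' bad) = 0 := by
    refine measure_image_null_of_locally_null μ fun p₀ ⟨hp₀M, hp₀S, _⟩ => ?_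
    obtain ⟨O, hO, hae⟩ := exists_nhds_ae_map_tangentSpaceOf_prod_le μ hM hS hf hp₀M hp₀S
    refine ⟨O, hO, measure_mono_null ?_ hae⟩
    rintro _ ⟨p, ⟨⟨hpM, hpS, hp⟩, hpO⟩, rfl⟩ hgood
    exact hp (hgood p.1 hpM hpO hpS)
  filter_upwards [measure_eq_zero_iff_ae_notMem.1 hbad] with t ht x hxM hxS
  by_contra hx
  exact ht ⟨(x, t), ⟨hxM, hxS, hx⟩, rfl⟩

end Transversality

end

/-- **Parametric Transversality Theorem.** If `F : M × T → N` is smooth and transverse to a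
submanifold `S ⊂ N` (parameter manifold `T = ℝ^c`), then for almost every `t` (all `t`
outside a Lebesgue-null set `Z`), the map `F_t = F(·, t) : M → N` is transverse to `S`. -/
theorem parametric_transversality (a b c m d s : ℕ)
    (M : Set (Euc a)) (N S : Set (Euc b))
    (hM : IsSubmanifoldOfDim m M) (hN : IsSubmanifoldOfDim d N)
    (hSN : S ⊆ N) (hS : IsSubmanifoldOfDim s S)
    (F : Euc a × Euc c → Euc b) (hF : ContDiff ℝ (⊤ : ℕ∞) F)
    (hmaps : MapsTo F (M ×ˢ (univ : Set (Euc c))) N)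
    (ht : ∀ x ∈ M, ∀ t : Euc c, F (x, t) ∈ S →
      ∀ w ∈ tangentSpaceOf N (F (x, t)), ∃ u ∈ tangentSpaceOf S (F (x, t)),
        ∃ v ∈ tangentSpaceOf (M ×ˢ (univ : Set (Euc c))) (x, t),
          w = u + fderiv ℝ F (x, t) v) :
    ∃ Z : Set (Euc c), MeasureTheory.volume Z = 0 ∧
      ∀ t ∉ Z, ∀ x ∈ M, F (x, t) ∈ S →
        ∀ w ∈ tangentSpaceOf N (F (x, t)), ∃ u ∈ tangentSpaceOf S (F (x, t)),
          ∃ v ∈ tangentSpaceOf M x, w = u + fderiv ℝ (fun x' => F (x', t)) x v := by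
  refine ⟨_, parametric_transversality_general MeasureTheory.volume hM hS hF,
    fun t htZ x hx hxS w hw => ?_⟩
  obtain ⟨u, hu, v, hv, rfl⟩ := ht x hx t hxS w hw
  obtain ⟨u', hu', _, ⟨v', hv', rfl⟩, huv⟩ :=
    Submodule.mem_sup.1 (not_not.1 htZ x hx hxS ⟨v, hv, rfl⟩)
  exact ⟨u + u', add_mem hu hu', v', hv', by rw [add_assoc]; exact congrArg (u + ·) huv.symm⟩
end
end

section
/- (Whitney Approximation) Let f : M → N be a continuous map between smooth manifolds, δ : M → ℝ a positive continuous function, and d a metric inducing the topology of N. Then there exists a smooth map g : M → N with d(f(x), g(x)) ≤ δ(x) for all x ∈ M; moreover, if f is already smooth on (a neighborhood of) a closed subset A ⊂ M, then g can be chosen with g|_A = f|_A. -/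
/- Framework: embedded submanifolds of Euclidean space (Guillemin–Pollack style),
tangent spaces via velocity vectors of curves, local-straightening charts. -/

noncomputable section
open Set Function
open scoped RealInnerProductSpace

/-!
The target `N` is a smooth neighbourhood retract: near `N` the nearest-point projection is defined
and smooth. Indeed, if `p` parametrizes `N` near `y₀ = p κ₀`, a nearest point `p κ` to `w` solves
`⟪p κ - w, dp_κ v⟫ = 0` for all `v`. At `w = y₀`, `κ = κ₀` the `κ`-derivative of this equation is
the Gram form `⟪dp u, dp v⟫`, the second derivative of `p` being paired with `p κ₀ - y₀ = 0`; it is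
nondegenerate, so the inverse function theorem solves the equation smoothly for `κ`.

Given the retraction `r`, it suffices to approximate `f` by a smooth map into the ambient vector
space with values `z` over `x` such that `r z` is defined and `d (f x) (r z) ≤ δ x`. Smooth
partitions of unity glue local choices, since being close to `f x`, and being equal to it when
`x ∈ C`, are convex conditions. Composing with `r` leaves the values on `C` unchanged.
-/

open Filter Topology Metric
open scoped ContDiff Manifold

-- Pitfall: `ContDiffAt 𝕜 ∞ f a` does not make `f` of class `C^∞` on a neighbourhood of `a`, only
-- `C^m` on one depending on the finite order `m`.
lemma exists_openPartialHomeomorph_contDiffOn_symm {𝕜 E F : Type*} [RCLike 𝕜]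
    [NormedAddCommGroup E] [NormedSpace 𝕜 E] [CompleteSpace E]
    [NormedAddCommGroup F] [NormedSpace 𝕜 F] {n : WithTop ℕ∞} (hn : n ≠ 0) {f : E → F}
    {O : Set E} (hO : IsOpen O) (hf : ContDiffOn 𝕜 n f O) {a : E} (ha : a ∈ O) {f' : E ≃L[𝕜] F}
    (hf' : HasFDerivAt f (f' : E →L[𝕜] F) a) :
    ∃ e : OpenPartialHomeomorph E F, ⇑e = f ∧ a ∈ e.source ∧ e.source ⊆ O ∧
      ContDiffOn 𝕜 n e.symm e.target := by
  have hf_at : ∀ x ∈ O, ContDiffAt 𝕜 n f x := fun x hx ↦ hf.contDiffAt (hO.mem_nhds hx)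
  have hcont : ContinuousAt (fderiv 𝕜 f) a :=
    ((hf_at a ha).fderiv_right (m := 0)
      (by simpa using ENat.one_le_iff_ne_zero_withTop.2 hn)).continuousAt
  have hequiv : ∀ᶠ x in 𝓝 a, fderiv 𝕜 f x ∈ range ((↑) : (E ≃L[𝕜] F) → E →L[𝕜] F) :=
    hcont (hf'.fderiv ▸ f'.nhds)
  obtain ⟨Q, hQ, hQo, haQ⟩ := _root_.mem_nhds_iff.1 hequiv
  let e := ((hf_at a ha).toOpenPartialHomeomorph f hf' hn).restrOpen (O ∩ Q) (hO.inter hQo)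
  refine ⟨e, rfl, ⟨(hf_at a ha).mem_toOpenPartialHomeomorph_source hf' hn, ha, haQ⟩,
    fun x hx ↦ hx.2.1, fun y hy ↦ ?_⟩
  obtain ⟨-, hyO, hyQ⟩ : e.symm y ∈ e.source := e.map_target hy
  obtain ⟨f₀', hf₀'⟩ := hQ hyQ
  have hf_symm := hf_at _ hyO
  exact (e.contDiffAt_symm (f₀' := f₀') hy
    (hf₀' ▸ (hf_symm.differentiableAt hn).hasFDerivAt) hf_symm).contDiffWithinAt

section NearestPoint

/-- `y` is a point of `N` at minimal distance from `w`. The retraction onto a submanifold sends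
`w` to such a point. -/
def IsNearestPoint {X : Type*} [PseudoMetricSpace X] (N : Set X) (w y : X) : Prop :=
  y ∈ N ∧ IsMinOn (dist w) N y

variable {X : Type*} [PseudoMetricSpace X] {N : Set X} {w y z : X}

lemma IsNearestPoint.dist_le_two_mul (h : IsNearestPoint N w y) (hz : z ∈ N) :
    dist y z ≤ 2 * dist w z := by
  calc dist y z ≤ dist w y + dist w z := dist_triangle_left y z w
    _ ≤ dist w z + dist w z := by gcongr; exact h.2 hz
    _ = 2 * dist w z := (two_mul _).symm

lemma eventually_forall_isNearestPoint_mem {T : Set X} (hy : y ∈ N) (hT : T ∈ 𝓝[N] y) :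
    ∀ᶠ w in 𝓝 y, ∀ z, IsNearestPoint N w z → z ∈ T := by
  obtain ⟨ε, hε, hεT⟩ := mem_nhdsWithin_iff.1 hT
  filter_upwards [ball_mem_nhds y (half_pos hε)] with w hw z hz
  refine hεT ⟨?_, hz.1⟩
  rw [mem_ball] at hw ⊢
  linarith [hz.dist_le_two_mul hy]

lemma eventually_exists_isNearestPoint {C : Set X} (hC : IsCompact C) (hCN : C ⊆ N) (hy : y ∈ N)
    (hCy : C ∈ 𝓝[N] y) : ∀ᶠ w in 𝓝 y, ∃ z, IsNearestPoint N w z := by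
  obtain ⟨ε, hε, hεC⟩ := mem_nhdsWithin_iff.1 hCy
  have hyC : y ∈ C := hεC ⟨mem_ball_self hε, hy⟩
  filter_upwards [ball_mem_nhds y (half_pos hε)] with w hw
  obtain ⟨z, hz, hmin⟩ := hC.exists_isMinOn ⟨y, hyC⟩ (f := dist w) (by fun_prop)
  refine ⟨z, hCN hz, fun u hu ↦ ?_⟩
  by_cases huC : u ∈ C
  · exact hmin huC
  · have huε : ε ≤ dist u y := not_lt.1 fun h ↦ huC (hεC ⟨h, hu⟩)
    rw [mem_ball] at hw
    calc dist w z ≤ dist w y := hmin hyC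
      _ ≤ dist u y - dist w y := by linarith
      _ ≤ dist w u := by linarith [dist_triangle_left u y w]

end NearestPoint

section CriticalPoint

variable {K E : Type*} [NormedAddCommGroup K] [NormedSpace ℝ K]
  [NormedAddCommGroup E] [InnerProductSpace ℝ E]

/-- The differential at `κ` of half the squared distance from `w` to `p`, as a function of `(w, κ)`.
It vanishes when `p κ` is a nearest point to `w`, an equation to be solved for `κ`. -/
def distSqDifferential (p : K → E) (q : E × K) : K →L[ℝ] ℝ :=
  (innerSL ℝ (p q.2 - q.1)).comp (fderiv ℝ p q.2)

variable {p : K → E} {V : Set K}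

lemma distSqDifferential_eq_zero_of_isLocalMin {w : E} {κ : K} (hp : DifferentiableAt ℝ p κ)
    (hmin : IsLocalMin (fun κ' ↦ dist w (p κ')) κ) : distSqDifferential p (w, κ) = 0 := by
  have hmin_sq : IsLocalMin (fun κ' ↦ ‖p κ' - w‖ ^ 2) κ := by
    filter_upwards [hmin] with κ' hκ'
    simp only [← dist_eq_norm, dist_comm _ w]
    gcongr
  have hzero := hmin_sq.hasFDerivAt_eq_zero (hp.hasFDerivAt.sub_const w).norm_sq
  rw [← Nat.cast_smul_eq_nsmul ℝ] at hzero
  exact (smul_eq_zero.1 hzero).resolve_left (by norm_num)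

lemma contDiffOn_distSqDifferential {m n : WithTop ℕ∞} (hV : IsOpen V) (hp : ContDiffOn ℝ n p V)
    (hmn : m + 1 ≤ n) : ContDiffOn ℝ m (distSqDifferential p) (Prod.snd ⁻¹' V) := by
  have hdiff : ContDiffOn ℝ m (fun q : E × K ↦ p q.2 - q.1) (Prod.snd ⁻¹' V) :=
    ((hp.of_le (le_self_add.trans hmn)).comp contDiffOn_snd fun _ ↦ id).sub contDiffOn_fst
  have hfderiv : ContDiffOn ℝ m (fun q : E × K ↦ fderiv ℝ p q.2) (Prod.snd ⁻¹' V) :=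
    (hp.fderiv_of_isOpen hV hmn).comp contDiffOn_snd fun _ ↦ id
  exact ((innerSL ℝ).contDiff.comp_contDiffOn hdiff).clm_comp hfderiv

/-- The bilinear form `(u, v) ↦ ⟪A u, B v⟫`; for `A = B` it is the Gram form of `A`. The
derivative of `distSqDifferential p` at `(p κ, κ)` has this shape. -/
def innerPullback {K₁ K₂ : Type*} [NormedAddCommGroup K₁] [NormedSpace ℝ K₁]
    [NormedAddCommGroup K₂] [NormedSpace ℝ K₂] (A : K₁ →L[ℝ] E) (B : K₂ →L[ℝ] E) :
    K₁ →L[ℝ] K₂ →L[ℝ] ℝ :=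
  (innerSL ℝ).bilinearComp A B

lemma exists_equiv_eq_innerPullback_self [FiniteDimensional ℝ K] {L : K →L[ℝ] E}
    (hL : Injective L) :
    ∃ e : K ≃L[ℝ] (K →L[ℝ] ℝ), (e : K →L[ℝ] K →L[ℝ] ℝ) = innerPullback L L := by
  have hinj : Injective (innerPullback L L) :=
    (injective_iff_map_eq_zero _).2 fun v hv ↦ (map_eq_zero_iff L hL).1 <|
      inner_self_eq_zero.1 (DFunLike.congr_fun hv v : ⟪L v, L v⟫ = 0)
  have hfinrank : Module.finrank ℝ K = Module.finrank ℝ (K →L[ℝ] ℝ) := by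
    rw [← Subspace.dual_finrank_eq, LinearMap.toContinuousLinearMap.finrank_eq]
  exact ⟨(LinearEquiv.ofInjectiveOfFinrankEq _ hinj hfinrank).toContinuousLinearEquiv, rfl⟩

lemma hasFDerivAt_distSqDifferential {κ : K} (hp : ContDiffAt ℝ 2 p κ) :
    HasFDerivAt (distSqDifferential p)
      (innerPullback ((fderiv ℝ p κ).comp (.snd ℝ E K) - .fst ℝ E K) (fderiv ℝ p κ)) (p κ, κ) := by
  have hp' : DifferentiableAt ℝ (fderiv ℝ p) κ :=
    (hp.fderiv_right (m := 1) (by norm_num)).differentiableAt one_ne_zero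
  have hdiff : HasFDerivAt (fun q : E × K ↦ p q.2 - q.1)
      ((fderiv ℝ p κ).comp (.snd ℝ E K) - .fst ℝ E K) (p κ, κ) :=
    ((hp.differentiableAt two_ne_zero).hasFDerivAt.comp (p κ, κ) hasFDerivAt_snd).sub
      hasFDerivAt_fst
  have hfderiv : HasFDerivAt (fun q : E × K ↦ fderiv ℝ p q.2) _ (p κ, κ) :=
    hp'.hasFDerivAt.comp (p κ, κ) hasFDerivAt_snd
  refine (((innerSL ℝ).hasFDerivAt.comp (p κ, κ) hdiff).clm_comp hfderiv).congr_fderiv ?_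
  simp only [comp_apply, sub_self, map_zero, ContinuousLinearMap.zero_comp, zero_add]
  rfl

lemma exists_equiv_hasFDerivAt_fst_distSqDifferential [FiniteDimensional ℝ K] {κ : K}
    (hp : ContDiffAt ℝ 2 p κ) (hinj : Injective (fderiv ℝ p κ)) :
    ∃ T : (E × K) ≃L[ℝ] E × (K →L[ℝ] ℝ), HasFDerivAt (fun q ↦ (q.1, distSqDifferential p q))
      (T : E × K →L[ℝ] E × (K →L[ℝ] ℝ)) (p κ, κ) := by
  obtain ⟨e, he⟩ := exists_equiv_eq_innerPullback_self hinj
  refine ⟨(ContinuousLinearEquiv.refl ℝ E).skewProd e (-innerPullback (.id ℝ E) (fderiv ℝ p κ)),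
    (hasFDerivAt_fst.prodMk (hasFDerivAt_distSqDifferential hp)).congr_fderiv ?_⟩
  have he' (v : K) : e v = innerPullback (fderiv ℝ p κ) (fderiv ℝ p κ) v := DFunLike.congr_fun he v
  ext q v <;> simp [he', innerPullback]

lemma exists_contDiffOn_eq_of_distSqDifferential_eq_zero [CompleteSpace E]
    [FiniteDimensional ℝ K] (hV : IsOpen V) (hp : ContDiffOn ℝ ∞ p V) {κ₀ : K} (hκ₀ : κ₀ ∈ V)
    (hinj : Injective (fderiv ℝ p κ₀)) :
    ∃ s : E → E, (∃ W, IsOpen W ∧ p κ₀ ∈ W ∧ ContDiffOn ℝ ∞ s W) ∧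
      ∀ᶠ q in 𝓝 (p κ₀, κ₀), distSqDifferential p q = 0 → p q.2 = s q.1 := by
  have hp₀ : ContDiffAt ℝ ∞ p κ₀ := hp.contDiffAt (hV.mem_nhds hκ₀)
  obtain ⟨T, hT⟩ := exists_equiv_hasFDerivAt_fst_distSqDifferential
    (hp₀.of_le (WithTop.coe_le_coe.2 le_top)) hinj
  obtain ⟨e, hecoe, hemem, heV, hesymm⟩ := exists_openPartialHomeomorph_contDiffOn_symm (n := ∞)
    (by simp) (hV.preimage continuous_snd)
    (contDiffOn_fst.prodMk (contDiffOn_distSqDifferential hV hp (by simp))) hκ₀ hT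
  have hcrit (q : E × K) (hq : distSqDifferential p q = 0) : e q = (q.1, 0) := by
    simp only [hecoe, hq]
  have hzero : distSqDifferential p (p κ₀, κ₀) = 0 := by simp [distSqDifferential]
  refine ⟨fun w ↦ p (e.symm (w, 0)).2, ⟨(fun w : E ↦ (w, (0 : K →L[ℝ] ℝ))) ⁻¹' e.target,
    e.open_target.preimage (by fun_prop), ?_, ?_⟩, ?_⟩
  · have htarget := e.map_source hemem
    rwa [hcrit _ hzero] at htarget
  · have hsymm : ContDiffOn ℝ ∞ (fun w : E ↦ (e.symm (w, 0)).2) _ :=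
      contDiffOn_snd.comp (hesymm.comp (contDiff_id.prodMk contDiff_const).contDiffOn fun _ ↦ id)
        (mapsTo_univ _ _)
    exact hp.comp hsymm fun w hw ↦ heV (e.map_target hw)
  · filter_upwards [e.open_source.mem_nhds hemem] with q hq hq0
    rw [← hcrit q hq0, e.left_inv hq]

end CriticalPoint

section Parametrization

variable {K E : Type*} [NormedAddCommGroup K] [NormedSpace ℝ K]
  [NormedAddCommGroup E] [InnerProductSpace ℝ E]

/-- `p` restricts on the open set `V` to a smooth parametrization of a piece of `N` which is an
immersion at `κ₀` and covers all points of `N` near `p κ₀`; the last field says that the images of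
small neighbourhoods of `κ₀` are neighbourhoods of `p κ₀` within `N`. -/
structure IsLocalParametrization (p : K → E) (V : Set K) (κ₀ : K) (N : Set E) : Prop where
  isOpen : IsOpen V
  mem : κ₀ ∈ V
  contDiffOn : ContDiffOn ℝ ∞ p V
  mapsTo : MapsTo p V N
  injective_fderiv : Injective (fderiv ℝ p κ₀)
  nhdsWithin_le : 𝓝[N] p κ₀ ≤ map p (𝓝 κ₀)

namespace IsLocalParametrization

variable {p : K → E} {V : Set K} {κ₀ : K} {N : Set E}

lemma image_mem (h : IsLocalParametrization p V κ₀ N) {P : Set K} (hP : P ∈ 𝓝 κ₀) :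
    p '' P ∈ 𝓝[N] p κ₀ :=
  h.nhdsWithin_le (image_mem_map hP)

lemma distSqDifferential_eq_zero (h : IsLocalParametrization p V κ₀ N) {w : E} {κ : K}
    (hκ : κ ∈ V) (hmin : IsNearestPoint N w (p κ)) : distSqDifferential p (w, κ) = 0 := by
  have hVκ : V ∈ 𝓝 κ := h.isOpen.mem_nhds hκ
  refine distSqDifferential_eq_zero_of_isLocalMin
    ((h.contDiffOn.contDiffAt hVκ).differentiableAt (by simp)) ?_
  filter_upwards [hVκ] with κ' hκ'
  exact hmin.2 (h.mapsTo hκ')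

variable [FiniteDimensional ℝ K]

lemma eventually_exists_isNearestPoint (h : IsLocalParametrization p V κ₀ N) :
    ∀ᶠ w in 𝓝 (p κ₀), ∃ y, IsNearestPoint N w y := by
  obtain ⟨C, hCκ₀, hCV, hC⟩ := local_compact_nhds (h.isOpen.mem_nhds h.mem)
  exact _root_.eventually_exists_isNearestPoint (hC.image_of_continuousOn
    (h.contDiffOn.continuousOn.mono hCV)) (h.mapsTo.mono_left hCV).image_subset (h.mapsTo h.mem)
    (h.image_mem hCκ₀)

lemma exists_contDiffOn_isNearestPoint [CompleteSpace E] (h : IsLocalParametrization p V κ₀ N) :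
    ∃ (W : Set E) (s : E → E), IsOpen W ∧ p κ₀ ∈ W ∧ ContDiffOn ℝ ∞ s W ∧
      ∀ w ∈ W, (∃ y, IsNearestPoint N w y) ∧ ∀ y, IsNearestPoint N w y → y = s w := by
  obtain ⟨s, ⟨W, hW, hκ₀W, hs⟩, hcrit⟩ := exists_contDiffOn_eq_of_distSqDifferential_eq_zero
    h.isOpen h.contDiffOn h.mem h.injective_fderiv
  obtain ⟨Q, hQ, P, hP, hQP⟩ := mem_nhds_prod_iff.1 hcrit
  have hnear : ∀ᶠ w in 𝓝 (p κ₀), ∀ y, IsNearestPoint N w y → y ∈ p '' (P ∩ V) :=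
    eventually_forall_isNearestPoint_mem (h.mapsTo h.mem)
      (h.image_mem (inter_mem hP (h.isOpen.mem_nhds h.mem)))
  obtain ⟨W', hW', hW'o, hκ₀W'⟩ :=
    _root_.mem_nhds_iff.1 ((h.eventually_exists_isNearestPoint.and hnear).and hQ)
  refine ⟨W ∩ W', s, hW.inter hW'o, ⟨hκ₀W, hκ₀W'⟩, hs.mono inter_subset_left, fun w hw ↦ ?_⟩
  obtain ⟨⟨hex, hmem⟩, hwQ⟩ := hW' hw.2
  refine ⟨hex, fun y hy ↦ ?_⟩
  obtain ⟨κ, ⟨hκP, hκV⟩, rfl⟩ := hmem y hy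
  exact hQP (mk_mem_prod hwQ hκP) (h.distSqDifferential_eq_zero hκV hy)

end IsLocalParametrization

end Parametrization

/-- `N` is a `C^n` neighbourhood retract: some open set containing `N` retracts onto it by a `C^n`
map. Through such a retraction, approximations in the ambient space become approximations in `N`.
The retraction is a map of the whole space, with arbitrary values off the open set. -/
def IsContDiffNhdsRetract {F : Type*} [NormedAddCommGroup F] [NormedSpace ℝ F] (n : WithTop ℕ∞)
    (N : Set F) : Prop :=
  ∃ (W : Set F) (r : F → F), IsOpen W ∧ N ⊆ W ∧ ContDiffOn ℝ n r W ∧ MapsTo r W N ∧ EqOn r id N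

section Submanifold

lemma injective_fderiv_of_eventually_comp_eq {𝕜 G E F : Type*} [NontriviallyNormedField 𝕜]
    [NormedAddCommGroup G] [NormedSpace 𝕜 G] [NormedAddCommGroup E] [NormedSpace 𝕜 E]
    [NormedAddCommGroup F] [NormedSpace 𝕜 F] {p : G → E} {φ : E → F} {x : G} {L : G →L[𝕜] F}
    (hp : DifferentiableAt 𝕜 p x) (hφ : DifferentiableAt 𝕜 φ (p x)) (hL : Injective L)
    (hφp : φ ∘ p =ᶠ[𝓝 x] L) : Injective (fderiv 𝕜 p x) := by
  have hcomp : (fderiv 𝕜 φ (p x)).comp (fderiv 𝕜 p x) = L := by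
    rw [← fderiv_comp x hφ hp, hφp.fderiv_eq, L.fderiv]
  exact Injective.of_comp (f := fderiv 𝕜 φ (p x)) (by rwa [← ContinuousLinearMap.coe_comp, hcomp])

lemma IsSubmanifoldOfDim.exists_isLocalParametrization {E : Type*} [NormedAddCommGroup E]
    [InnerProductSpace ℝ E] {k : ℕ} {N : Set E} (hN : IsSubmanifoldOfDim k N) {y : E}
    (hy : y ∈ N) : ∃ (K : Submodule ℝ E) (p : K → E) (V : Set K) (κ₀ : K),
      p κ₀ = y ∧ IsLocalParametrization p V κ₀ N := by
  obtain ⟨U, V, φ, ψ, K, -, hU, hV, hyU, hφ, hψ, hφV, hψU, hψφ, hφψ, hNU⟩ := hN y hy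
  have mem_iff {z : E} (hz : z ∈ U) : z ∈ N ↔ φ z ∈ K := by
    simpa [hz] using Set.ext_iff.1 hNU z
  let V' : Set K := (↑) ⁻¹' V
  let κ₀ : K := ⟨φ y, (mem_iff hyU).1 hy⟩
  have hκ₀ : ψ κ₀ = y := hψφ y hyU
  have hV' : IsOpen V' := hV.preimage continuous_subtype_val
  have hκ₀V : (κ₀ : E) ∈ V := hφV hyU
  have hp : ContDiffOn ℝ ∞ (fun κ : K ↦ ψ κ) V' :=
    hψ.comp K.subtypeL.contDiff.contDiffOn fun _ ↦ id
  have hVnhds : V' ∈ 𝓝 κ₀ := hV'.mem_nhds hκ₀V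
  have hφy : ContDiffAt ℝ ∞ φ y := hφ.contDiffAt (hU.mem_nhds hyU)
  refine ⟨K, fun κ ↦ ψ κ, V', κ₀, hκ₀, hV', hκ₀V, hp, ?_, ?_, ?_⟩
  · exact fun κ hκ ↦ (mem_iff (hψU hκ)).2 (by rw [hφψ κ hκ]; exact κ.2)
  · refine injective_fderiv_of_eventually_comp_eq (φ := φ) (L := K.subtypeL)
      ((hp.contDiffAt hVnhds).differentiableAt (by simp)) ?_ K.subtype_injective ?_
    · exact hκ₀.symm ▸ hφy.differentiableAt (by simp)
    · exact mem_of_superset hVnhds fun κ hκ ↦ hφψ κ hκ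
  · rw [hκ₀]
    intro P hP
    obtain ⟨Q, hQ, hQP⟩ := mem_nhds_subtype _ _ _ |>.1 (mem_map.1 hP)
    filter_upwards [self_mem_nhdsWithin, mem_nhdsWithin_of_mem_nhds (hU.mem_nhds hyU),
      mem_nhdsWithin_of_mem_nhds (hφy.continuousAt hQ)] with z hzN hzU hzQ
    exact hψφ z hzU ▸ hQP (a := ⟨φ z, (mem_iff hzU).1 hzN⟩) hzQ

lemma isContDiffNhdsRetract_of_isNearestPoint {E : Type*} [NormedAddCommGroup E]
    [NormedSpace ℝ E] {n : WithTop ℕ∞} {N : Set E}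
    (h : ∀ y ∈ N, ∃ (W : Set E) (s : E → E), IsOpen W ∧ y ∈ W ∧ ContDiffOn ℝ n s W ∧
      ∀ w ∈ W, (∃ z, IsNearestPoint N w z) ∧ ∀ z, IsNearestPoint N w z → z = s w) :
    IsContDiffNhdsRetract n N := by
  choose! W s hW hyW hs hWs using h
  let r : E → E := fun w ↦ Classical.epsilon (IsNearestPoint N w)
  have hr : ∀ y ∈ N, ∀ w ∈ W y, IsNearestPoint N w (r w) := fun y hy w hw ↦
    Classical.epsilon_spec (hWs y hy w hw).1
  have hrs : ∀ y ∈ N, EqOn r (s y) (W y) := fun y hy w hw ↦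
    (hWs y hy w hw).2 _ (hr y hy w hw)
  refine ⟨⋃ y ∈ N, W y, r, isOpen_biUnion hW, fun y hy ↦ mem_biUnion hy (hyW y hy), ?_, ?_, ?_⟩
  · intro w hw
    obtain ⟨y, hy, hwy⟩ := mem_iUnion₂.1 hw
    exact (((hs y hy).congr (hrs y hy)).contDiffAt ((hW y hy).mem_nhds hwy)).contDiffWithinAt
  · intro w hw
    obtain ⟨y, hy, hwy⟩ := mem_iUnion₂.1 hw
    exact (hr y hy w hwy).1
  · intro y hy
    have hdist := (hr y hy y (hyW y hy)).dist_le_two_mul hy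
    rw [dist_self, mul_zero] at hdist
    exact dist_le_zero.1 hdist

lemma IsSubmanifoldOfDim.isContDiffNhdsRetract {E : Type*} [NormedAddCommGroup E]
    [InnerProductSpace ℝ E] [FiniteDimensional ℝ E] {k : ℕ} {N : Set E}
    (hN : IsSubmanifoldOfDim k N) : IsContDiffNhdsRetract ∞ N := by
  refine isContDiffNhdsRetract_of_isNearestPoint fun y hy ↦ ?_
  obtain ⟨K, p, V, κ₀, rfl, hp⟩ := hN.exists_isLocalParametrization hy
  exact hp.exists_contDiffOn_isNearestPoint

end Submanifold

section ConvexSelection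

variable {E F : Type*} [NormedAddCommGroup E] [NormedSpace ℝ E] [FiniteDimensional ℝ E]
  [NormedAddCommGroup F] [NormedSpace ℝ F] {n : ℕ∞}

lemma exists_contDiffOn_forall_mem_convex_of_local_of_isOpen {Ω : Set E} (hΩ : IsOpen Ω)
    {t : E → Set F} (ht : ∀ x ∈ Ω, Convex ℝ (t x))
    (hloc : ∀ x ∈ Ω, ∃ U ∈ 𝓝 x, ∃ g : E → F, ContDiffOn ℝ n g U ∧ ∀ y ∈ U ∩ Ω, g y ∈ t y) :
    ∃ g : E → F, ContDiffOn ℝ n g Ω ∧ ∀ x ∈ Ω, g x ∈ t x := by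
  let Ω' : TopologicalSpace.Opens E := ⟨Ω, hΩ⟩
  have : LocallyCompactSpace Ω' := hΩ.locallyCompactSpace
  obtain ⟨G, hG⟩ : ∃ G : C^n⟮𝓘(ℝ, E), Ω'; 𝓘(ℝ, F), F⟯, ∀ x : Ω', G x ∈ t x := by
    refine exists_contMDiffMap_forall_mem_convex_of_local 𝓘(ℝ, E) (fun x ↦ ht x x.2) fun x ↦ ?_
    obtain ⟨U, hU, g, hg, hgt⟩ := hloc x x.2
    refine ⟨((↑) : Ω' → E) ⁻¹' U, continuous_subtype_val.continuousAt hU, fun y ↦ g y, ?_,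
      fun y hy ↦ hgt y ⟨hy, y.2⟩⟩
    exact hg.contMDiffOn.comp contMDiff_subtype_val.contMDiffOn fun _ ↦ id
  have hGext (y : Ω') : extend Subtype.val G 0 (y : E) = G y :=
    Subtype.val_injective.extend_apply G 0 y
  refine ⟨extend Subtype.val G 0, fun x hx ↦ ?_, fun x hx ↦ hGext ⟨x, hx⟩ ▸ hG ⟨x, hx⟩⟩
  have hG_at : ContMDiffAt 𝓘(ℝ, E) 𝓘(ℝ, F) n (fun y : Ω' ↦ extend Subtype.val G 0 (y : E))
      ⟨x, hx⟩ := by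
    simpa only [hGext] using G.contMDiff ⟨x, hx⟩
  exact (contMDiffAt_subtype_iff.1 hG_at).contDiffAt.contDiffWithinAt

lemma exists_contDiffOn_forall_mem_convex_of_local {s : Set E} {t : E → Set F}
    (ht : ∀ x ∈ s, Convex ℝ (t x))
    (hloc : ∀ x ∈ s, ∃ U ∈ 𝓝 x, ∃ g : E → F, ContDiffOn ℝ n g U ∧ ∀ y ∈ U ∩ s, g y ∈ t y) :
    ∃ g : E → F, (∃ V, IsOpen V ∧ s ⊆ V ∧ ContDiffOn ℝ n g V) ∧ ∀ x ∈ s, g x ∈ t x := by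
  choose! U hU g hg hgt using hloc
  have hsV : s ⊆ ⋃ x ∈ s, interior (U x) := fun x hx ↦
    mem_biUnion hx (mem_interior_iff_mem_nhds.2 (hU x hx))
  have hVo : IsOpen (⋃ x ∈ s, interior (U x)) := isOpen_biUnion fun _ _ ↦ isOpen_interior
  obtain ⟨G, hG, hGt⟩ := exists_contDiffOn_forall_mem_convex_of_local_of_isOpen (n := n) hVo
    (t := fun x ↦ {z | x ∈ s → z ∈ t x}) (fun x _ u hu v hv a b ha hb hab hx ↦
      ht x hx (hu hx) (hv hx) ha hb hab) fun y hy ↦ by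
    obtain ⟨x, hx, hyx⟩ := mem_iUnion₂.1 hy
    exact ⟨U x, mem_interior_iff_mem_nhds.1 hyx, g x, hg x hx,
      fun z hz hzs ↦ hgt x hx z ⟨hz.1, hzs⟩⟩
  exact ⟨G, ⟨_, hVo, hsV, hG⟩, fun x hx ↦ hGt x (hsV hx) hx⟩

end ConvexSelection

lemma eventually_edist_lt_infEDist_slice_compl {X Y : Type*} [TopologicalSpace X]
    [PseudoEMetricSpace Y] {s : Set X} {f : X → Y} {O : Set (X × Y)} {x : X}
    (hf : ContinuousWithinAt f s x) (hO : O ∈ 𝓝[s] x ×ˢ 𝓝 (f x)) :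
    ∀ᶠ y in 𝓝[s] x, edist (f x) (f y) < infEDist (f y) {z | (y, z) ∈ O}ᶜ := by
  obtain ⟨P, hP, Q, hQ, hPQ⟩ := mem_prod_iff.1 hO
  obtain ⟨ε, hε, hεQ⟩ := EMetric.mem_nhds_iff.1 hQ
  have hfε : ∀ᶠ y in 𝓝[s] x, f y ∈ eball (f x) (ε / 2) :=
    hf (eball_mem_nhds _ (ENNReal.half_pos hε.ne'))
  filter_upwards [hP, hfε] with y hyP hyε
  rw [mem_eball'] at hyε
  refine hyε.trans_le (le_infEDist.2 fun z hz ↦ ?_)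
  by_contra! hyz
  refine hz (hPQ ⟨hyP, hεQ ?_⟩)
  calc edist z (f x) ≤ edist z (f y) + edist (f y) (f x) := edist_triangle _ _ _
    _ < ε / 2 + ε / 2 := by
      rw [edist_comm z, edist_comm (f y) (f x)]
      exact ENNReal.add_lt_add hyz hyε
    _ = ε := ENNReal.add_halves ε

section Approximation

variable {E F : Type*} [NormedAddCommGroup E] [NormedSpace ℝ E] [FiniteDimensional ℝ E]
  [NormedAddCommGroup F] [NormedSpace ℝ F] {n : ℕ∞}

lemma exists_contDiffOn_graph_subset_eqOn {M C U : Set E} {f : E → F} {O : Set (E × F)}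
    (hf : ContinuousOn f M) (hO : ∀ x ∈ M, O ∈ 𝓝[M] x ×ˢ 𝓝 (f x)) (hC : IsClosed C)
    (hU : IsOpen U) (hMCU : M ∩ C ⊆ U) (hfU : ContDiffOn ℝ n f U) :
    ∃ g : E → F, (∃ V, IsOpen V ∧ M ⊆ V ∧ ContDiffOn ℝ n g V) ∧
      (∀ x ∈ M, (x, g x) ∈ O) ∧ EqOn f g (M ∩ C) := by
  let ρ : E → ENNReal := fun y ↦ infEDist (f y) {z | (y, z) ∈ O}ᶜ
  let t : E → Set F := fun y ↦ eball (f y) (ρ y) ∩ {z | y ∈ C → z = f y}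
  have ht (y : E) : Convex ℝ (t y) :=
    (convex_eball _ _).inter (convex_singleton (f y)).setOfPred_const_imp
  have hρ (x : E) (hx : x ∈ M) : ∀ᶠ y in 𝓝 x, y ∈ M → f x ∈ eball (f y) (ρ y) :=
    eventually_nhdsWithin_iff.1 (eventually_edist_lt_infEDist_slice_compl (hf x hx) (hO x hx))
  obtain ⟨g, hg, hgt⟩ := exists_contDiffOn_forall_mem_convex_of_local (n := n) (s := M)
    (fun y _ ↦ ht y) fun x hx ↦ by
    by_cases hxC : x ∈ C
    · refine ⟨U, hU.mem_nhds (hMCU ⟨hx, hxC⟩), f, hfU, fun y hy ↦ ⟨?_, fun _ ↦ rfl⟩⟩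
      exact mem_eball_self (pos_of_mem_eball ((hρ y hy.2).self_of_nhds hy.2))
    · refine ⟨_, (hρ x hx).and (hC.isOpen_compl.mem_nhds hxC), fun _ ↦ f x, contDiffOn_const,
        fun y hy ↦ ⟨hy.1.1 hy.2, fun hyC ↦ absurd hyC hy.1.2⟩⟩
  refine ⟨g, hg, fun x hx ↦ ?_, fun x hx ↦ ((hgt x hx.1).2 hx.2).symm⟩
  by_contra hxO
  exact (infEDist_le_edist_of_mem hxO).not_gt (mem_eball'.1 (hgt x hx).1)

lemma IsContDiffNhdsRetract.exists_contDiffOn_graph_subset_eqOn {M C U : Set E} {N : Set F}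
    (hN : IsContDiffNhdsRetract n N) {f : E → F} (hf : ContinuousOn f M) (hmaps : MapsTo f M N)
    {O : Set (E × F)} (hO : ∀ x ∈ M, O ∈ 𝓝[M] x ×ˢ 𝓝[N] (f x)) (hC : IsClosed C) (hU : IsOpen U)
    (hMCU : M ∩ C ⊆ U) (hfU : ContDiffOn ℝ n f U) :
    ∃ g : E → F, (∃ V, IsOpen V ∧ M ⊆ V ∧ ContDiffOn ℝ n g V) ∧ MapsTo g M N ∧
      (∀ x ∈ M, (x, g x) ∈ O) ∧ EqOn f g (M ∩ C) := by
  obtain ⟨W, r, hW, hNW, hr, hrN, hrid⟩ := hN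
  have hrO : ∀ x ∈ M, {p : E × F | p.2 ∈ W ∧ (p.1, r p.2) ∈ O} ∈ 𝓝[M] x ×ˢ 𝓝 (f x) := by
    intro x hx
    have hWx : W ∈ 𝓝 (f x) := hW.mem_nhds (hNW (hmaps hx))
    have hr_tendsto : Tendsto r (𝓝 (f x)) (𝓝[N] (f x)) := by
      refine tendsto_nhdsWithin_iff.2 ⟨?_, mem_of_superset hWx hrN⟩
      simpa only [hrid (hmaps hx), id] using (hr.continuousOn.continuousAt hWx).tendsto
    exact (tendsto_snd.eventually hWx).and ((tendsto_id.prodMap hr_tendsto).eventually (hO x hx))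
  obtain ⟨g, ⟨V, hV, hMV, hgV⟩, hgO, hfg⟩ :=
    _root_.exists_contDiffOn_graph_subset_eqOn hf hrO hC hU hMCU hfU
  refine ⟨r ∘ g, ⟨V ∩ g ⁻¹' W, hgV.continuousOn.isOpen_inter_preimage hV hW,
    fun x hx ↦ ⟨hMV hx, (hgO x hx).1⟩, ?_⟩, fun x hx ↦ hrN (hgO x hx).1,
    fun x hx ↦ (hgO x hx).2, fun x hx ↦ ?_⟩
  · exact hr.comp (hgV.mono inter_subset_left) fun x hx ↦ hx.2
  · rw [comp_apply, ← hfg hx, hrid (hmaps hx.1), id]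

lemma setOf_le_mem_nhdsWithin_prod_nhdsWithin {X Y : Type*} [TopologicalSpace X]
    [TopologicalSpace Y] {M : Set X} {N : Set Y} {f : X → Y} {δ : X → ℝ} {d : Y → Y → ℝ} {x : X}
    (hf : ContinuousWithinAt f M x) (hmaps : MapsTo f M N) (hx : x ∈ M)
    (hδ : ContinuousWithinAt δ M x) (hδpos : 0 < δ x)
    (hdsymm : ∀ y ∈ N, ∀ z ∈ N, d y z = d z y)
    (hdtri : ∀ y ∈ N, ∀ z ∈ N, ∀ w ∈ N, d y w ≤ d y z + d z w)
    (hd : ∀ ε > 0, ∀ᶠ z in 𝓝[N] f x, d z (f x) < ε) :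
    {p : X × Y | d (f p.1) p.2 ≤ δ p.1} ∈ 𝓝[M] x ×ˢ 𝓝[N] (f x) := by
  have hd4 := hd (δ x / 4) (by positivity)
  have hfN : Tendsto f (𝓝[M] x) (𝓝[N] (f x)) := hf.tendsto_nhdsWithin hmaps
  have hδ2 : ∀ᶠ y in 𝓝[M] x, δ x / 2 < δ y := hδ.eventually_const_lt (half_lt_self hδpos)
  have hnear : ∀ᶠ y in 𝓝[M] x, d (f y) (f x) < δ x / 4 ∧ δ x / 2 < δ y ∧ f y ∈ N := by
    filter_upwards [hfN.eventually hd4, hδ2, self_mem_nhdsWithin] with y hy hδy hyM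
    exact ⟨hy, hδy, hmaps hyM⟩
  filter_upwards [hnear.prod_mk (hd4.and self_mem_nhdsWithin)]
    with ⟨y, z⟩ ⟨⟨hy, hδy, hyN⟩, hz, hzN⟩
  rw [← hdsymm (f x) (hmaps hx) z hzN] at hz
  calc d (f y) z ≤ d (f y) (f x) + d (f x) z := hdtri _ hyN _ (hmaps hx) _ hzN
    _ ≤ δ y := by linarith

theorem whitney_approximation_general {M C U : Set E} {N : Set F} (hN : IsContDiffNhdsRetract n N)
    {f : E → F} (hf : ContinuousOn f M) (hmaps : MapsTo f M N)
    {δ : E → ℝ} (hδ : ContinuousOn δ M) (hδpos : ∀ x ∈ M, 0 < δ x) {d : F → F → ℝ}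
    (hdsymm : ∀ y ∈ N, ∀ z ∈ N, d y z = d z y)
    (hdtri : ∀ y ∈ N, ∀ z ∈ N, ∀ w ∈ N, d y w ≤ d y z + d z w)
    (hd : ∀ y ∈ N, ∀ ε > 0, ∀ᶠ z in 𝓝[N] y, d z y < ε)
    (hC : IsClosed C) (hU : IsOpen U) (hMCU : M ∩ C ⊆ U) (hfU : ContDiffOn ℝ n f U) :
    ∃ g : E → F, (∃ V, IsOpen V ∧ M ⊆ V ∧ ContDiffOn ℝ n g V) ∧ MapsTo g M N ∧
      (∀ x ∈ M, d (f x) (g x) ≤ δ x) ∧ EqOn f g (M ∩ C) :=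
  hN.exists_contDiffOn_graph_subset_eqOn hf hmaps
    (fun x hx ↦ setOf_le_mem_nhdsWithin_prod_nhdsWithin (hf x hx) hmaps hx (hδ x hx) (hδpos x hx)
      hdsymm hdtri (hd (f x) (hmaps hx))) hC hU hMCU hfU

end Approximation

/-- **Whitney Approximation Theorem.** For a continuous map `f : M → N`, a positive
continuous function `δ` on `M`, and any metric `d` inducing the topology of `N`, there is a
smooth map `g : M → N` with `d(f x, g x) ≤ δ x` for all `x ∈ M`; if `f` is smooth on a
neighborhood of a closed subset `A ⊂ M`, then `g` can be chosen with `g|_A = f|_A`. -/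
theorem whitney_approximation (a b m dN : ℕ) (M : Set (Euc a)) (N : Set (Euc b))
    (hM : IsSubmanifoldOfDim m M) (hN : IsSubmanifoldOfDim dN N)
    (f : Euc a → Euc b) (hf : ContinuousOn f M) (hmaps : MapsTo f M N)
    (δ : Euc a → ℝ) (hδ : ContinuousOn δ M) (hδpos : ∀ x ∈ M, 0 < δ x)
    -- d is a metric on N inducing its subspace topology
    (d : Euc b → Euc b → ℝ)
    (hd0 : ∀ y ∈ N, ∀ z ∈ N, (d y z = 0 ↔ y = z))
    (hdsymm : ∀ y ∈ N, ∀ z ∈ N, d y z = d z y)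
    (hdtri : ∀ y ∈ N, ∀ z ∈ N, ∀ w ∈ N, d y w ≤ d y z + d z w)
    (hdtop : ∀ y ∈ N, ∀ ε > (0:ℝ),
      (∃ δ' > (0:ℝ), ∀ z ∈ N, dist z y < δ' → d z y < ε) ∧
      (∃ δ'' > (0:ℝ), ∀ z ∈ N, d z y < δ'' → dist z y < ε))
    -- A is a closed subset of M and f is smooth on a neighborhood of A
    (A C : Set (Euc a)) (hC : IsClosed C) (hA : A = M ∩ C)
    (UA : Set (Euc a)) (hUA : IsOpen UA) (hAUA : A ⊆ UA)
    (hfA : ContDiffOn ℝ (⊤ : ℕ∞) f UA) :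
    ∃ g : Euc a → Euc b,
      (∃ V, IsOpen V ∧ M ⊆ V ∧ ContDiffOn ℝ (⊤ : ℕ∞) g V) ∧
      MapsTo g M N ∧ (∀ x ∈ M, d (f x) (g x) ≤ δ x) ∧ EqOn f g A := by
  subst hA
  exact whitney_approximation_general hN.isContDiffNhdsRetract hf hmaps hδ hδpos hdsymm hdtri
    (fun y hy ε hε ↦ mem_nhdsWithin_iff.2 <| (hdtop y hy ε hε).1.imp fun _ h ↦
      ⟨h.1, fun z hz ↦ h.2 z hz.2 hz.1⟩) hC hUA hAUA hfA
end
end
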